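/- arXiv:2511.04430 — 9 statements merged into one kernel-verified Lean document; each statement's English description precedes it below -/
import Mathlib

section
/- Let N be a positive integer and f, g ∈ R_N. The code BB_N(f,g) is topological if and only if for every prime p dividing N, the code BB_p(f_p, g_p) is topological, where f_p, g_p ∈ R_p are the coefficientwise reductions of f and g modulo p. -/
/-- The Laurent polynomial ring `(ZMod N)[X^{±1}, Y^{±1}]`. -/
abbrev RR (N : ℕ) : Type := AddMonoidAlgebra (ZMod N) (ℤ × ℤ)

/-- The code `BB_N(f,g)` is topological. -/
def IsTopological {N : ℕ} (f g : RR N) : Prop :=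
  ∀ r s : RR N, r * f + s * g = 0 → ∃ h : RR N, r = h * g ∧ s = -(h * f)

/-- Coefficientwise reduction `R_N → R_p` modulo a divisor `p` of `N`. -/
noncomputable def red (N p : ℕ) (h : p ∣ N) : RR N →+* RR p :=
  AddMonoidAlgebra.liftNCRingHom
    ((AddMonoidAlgebra.singleZeroRingHom).comp (ZMod.castHom h (ZMod p)))
    (AddMonoidAlgebra.of (ZMod p) (ℤ × ℤ))
    (fun _ _ => Commute.all _ _)

/-!
Call the syzygies of `f, g` trivial over a ring if its Koszul complex on `f, g` is exact in the
middle. Over a Noetherian ring this forces `Ann f ∩ Ann g = 0`: applied to the syzygies `(c, 0)`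
with `c ∈ Ann f` it gives `Ann f = g • Ann f`, so by Nakayama's lemma some multiple of `g` acts as
the identity on `Ann f`. If `N = p * m`, then multiplying a syzygy modulo `p` by `m` gives a
syzygy over `A`, whose witness `h` satisfies `p * h ∈ Ann f ∩ Ann g`; as `A` is flat over
`ZMod N`, `h` is a multiple of `m`, and the quotient is a witness modulo `p`. Conversely,
witnesses modulo `a` and modulo `b` combine to a witness modulo `a * b`, so triviality modulo the
primes dividing `N` propagates to `N = 0`.
-/

section Syzygies

variable {A B : Type*} [CommRing A] [CommRing B] {a b f g : A}

/-- The syzygies of `f, g` are trivial: every relation `r * f + s * g = 0` is a multiple of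
`g * f - f * g = 0`. Equivalently, the Koszul complex of `f, g` is exact in the middle. It extends
`IsTopological` to arbitrary commutative rings. -/
def HasTrivialSyzygies (f g : A) : Prop :=
  ∀ r s : A, r * f + s * g = 0 → ∃ h : A, r = h * g ∧ s = -(h * f)

/-- The images of `f, g` in `A ⧸ (a)` have trivial syzygies, expressed by divisibility in `A` so
that different moduli can be compared. -/
def HasTrivialSyzygiesMod (a f g : A) : Prop :=
  ∀ r s : A, a ∣ r * f + s * g → ∃ h : A, a ∣ r - h * g ∧ a ∣ s + h * f

theorem hasTrivialSyzygies_map_iff {φ : A →+* B} (hφ : Function.Surjective φ)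
    (hker : RingHom.ker φ = Ideal.span {a}) :
    HasTrivialSyzygies (φ f) (φ g) ↔ HasTrivialSyzygiesMod a f g := by
  have dvd_iff_map_eq_zero (x : A) : a ∣ x ↔ φ x = 0 := by
    rw [← Ideal.mem_span_singleton, ← hker, RingHom.mem_ker]
  simp only [HasTrivialSyzygies, HasTrivialSyzygiesMod, hφ.forall, hφ.exists,
    dvd_iff_map_eq_zero, map_add, map_sub, map_mul, sub_eq_zero, add_eq_zero_iff_eq_neg]

theorem hasTrivialSyzygiesMod_zero :
    HasTrivialSyzygiesMod 0 f g ↔ HasTrivialSyzygies f g := by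
  simp only [HasTrivialSyzygiesMod, HasTrivialSyzygies, zero_dvd_iff, sub_eq_zero,
    add_eq_zero_iff_eq_neg]

theorem hasTrivialSyzygies_mk_iff :
    HasTrivialSyzygies (Ideal.Quotient.mk (Ideal.span {a}) f)
      (Ideal.Quotient.mk (Ideal.span {a}) g) ↔ HasTrivialSyzygiesMod a f g :=
  hasTrivialSyzygies_map_iff Ideal.Quotient.mk_surjective Ideal.mk_ker

theorem hasTrivialSyzygiesMod_one : HasTrivialSyzygiesMod 1 f g :=
  fun _ _ _ => ⟨0, one_dvd _, one_dvd _⟩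

theorem HasTrivialSyzygiesMod.mul (hcancel : ∀ x, a * b ∣ a * x → b ∣ x)
    (ha : HasTrivialSyzygiesMod a f g) (hb : HasTrivialSyzygiesMod b f g) :
    HasTrivialSyzygiesMod (a * b) f g := by
  intro r s hrs
  obtain ⟨h, ⟨r', hr⟩, ⟨s', hs⟩⟩ := ha r s (dvd_of_mul_right_dvd hrs)
  have lifted : a * (r' * f + s' * g) = r * f + s * g := by
    linear_combination (-f) * hr - g * hs
  obtain ⟨h', ⟨u, hu⟩, ⟨v, hv⟩⟩ := hb r' s' (hcancel _ (lifted ▸ hrs))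
  refine ⟨h + a * h', ⟨u, ?_⟩, ⟨v, ?_⟩⟩
  · linear_combination hr + a * hu
  · linear_combination hs + a * hv

theorem HasTrivialSyzygies.eq_zero_of_mul_eq_zero [IsNoetherianRing A]
    (hfg : HasTrivialSyzygies f g) {c : A} (hcf : c * f = 0) (hcg : c * g = 0) : c = 0 := by
  let annF : Ideal A := LinearMap.ker (LinearMap.mulRight A f)
  have mem_annF {x : A} : x ∈ annF ↔ x * f = 0 := Iff.rfl
  have le_smul : annF ≤ Ideal.span {g} • annF := by
    intro x hx
    obtain ⟨y, rfl, hy⟩ := hfg x 0 (by rwa [zero_mul, add_zero, ← mem_annF])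
    rw [mul_comm y g]
    exact Submodule.smul_mem_smul (Ideal.mem_span_singleton_self g)
      (mem_annF.mpr (neg_eq_zero.mp hy.symm))
  obtain ⟨e, he, he_smul⟩ := Submodule.exists_mem_and_smul_eq_self_of_fg_of_le_smul _ annF
    (IsNoetherian.noetherian annF) le_smul
  obtain ⟨k, rfl⟩ := Ideal.mem_span_singleton.mp he
  have hc : g * k * c = c := he_smul c (mem_annF.mpr hcf)
  linear_combination k * hcg - hc

theorem HasTrivialSyzygies.mod [IsNoetherianRing A] (hfg : HasTrivialSyzygies f g)
    (hab : a * b = 0) (ha : ∀ x, a * x = 0 → b ∣ x) (hb : ∀ x, b * x = 0 → a ∣ x) :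
    HasTrivialSyzygiesMod a f g := by
  rintro r s ⟨t, ht⟩
  obtain ⟨h, hr, hs⟩ := hfg (b * r) (b * s) (by linear_combination b * ht + t * hab)
  have a_mul_h : a * h = 0 := hfg.eq_zero_of_mul_eq_zero
    (by linear_combination a * hs - s * hab) (by linear_combination r * hab - a * hr)
  obtain ⟨k, rfl⟩ := ha h a_mul_h
  exact ⟨k, hb _ (by linear_combination hr), hb _ (by linear_combination hs)⟩

end Syzygies

section FlatAlgebra

theorem algebraMap_dvd_of_mul_eq_zero {R A : Type*} [CommRing R] [CommRing A] [Algebra R A]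
    [Module.Flat R A] {a b : R} (hab : ∀ c, a * c = 0 → b ∣ c) {x : A}
    (hx : algebraMap R A a * x = 0) : algebraMap R A b ∣ x := by
  obtain ⟨k, c, y, x_eq, hc⟩ := Module.Flat.isTrivialRelation_of_sum_smul_eq_zero
    (f := fun _ : Unit => a) (x := fun _ => x) (by simpa [Algebra.smul_def] using hx)
  rw [show x = ∑ j, c () j • y j from x_eq ()]
  refine Finset.dvd_sum fun j _ => ?_
  rw [Algebra.smul_def]
  exact (map_dvd (algebraMap R A) (hab _ (by simpa using hc j))).mul_right _

theorem zmod_natCast_dvd_of_mul_eq_zero {N a b : ℕ} (hN : N ≠ 0) (hab : a * b = N) {c : ZMod N}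
    (hc : (a : ZMod N) * c = 0) : (b : ZMod N) ∣ c := by
  obtain ⟨k, rfl⟩ := ZMod.intCast_surjective c
  have ha : (a : ℤ) ≠ 0 := Nat.cast_ne_zero.mpr (left_ne_zero_of_mul (hab ▸ hN))
  have hdvd : (a * b : ℤ) ∣ a * k := by
    rw [← Nat.cast_mul, hab, ← ZMod.intCast_zmod_eq_zero_iff_dvd]
    exact_mod_cast hc
  simpa using map_dvd (Int.castRingHom (ZMod N)) ((mul_dvd_mul_iff_left ha).mp hdvd)

variable {N : ℕ} (A : Type*) [CommRing A] [Algebra (ZMod N) A]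

theorem natCast_eq_zero_of_zmodAlgebra : (N : A) = 0 := by
  rw [← map_natCast (algebraMap (ZMod N) A), ZMod.natCast_self, map_zero]

variable {A} [Module.Flat (ZMod N) A] {a b : ℕ}

theorem natCast_dvd_of_mul_eq_zero (hN : N ≠ 0) (hab : a * b = N) (x : A)
    (hx : (a : A) * x = 0) : (b : A) ∣ x := by
  rw [← map_natCast (algebraMap (ZMod N) A)] at hx ⊢
  exact algebraMap_dvd_of_mul_eq_zero (fun _ => zmod_natCast_dvd_of_mul_eq_zero hN hab) hx

theorem natCast_dvd_of_mul_dvd_mul (hN : N ≠ 0) (hab : a * b ∣ N) (x : A)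
    (hx : (a * b : A) ∣ a * x) : (b : A) ∣ x := by
  obtain ⟨c, hc⟩ := hab
  obtain ⟨y, hy⟩ := hx
  have hbc : ((b * c : ℕ) : A) ∣ x - b * y :=
    natCast_dvd_of_mul_eq_zero (a := a) hN (by rw [hc, mul_assoc]) _ (by linear_combination hy)
  rw [Nat.cast_mul] at hbc
  exact (dvd_sub_left (dvd_mul_right _ y)).mp (dvd_of_mul_right_dvd hbc)

theorem hasTrivialSyzygiesMod_of_forall_prime (hN : N ≠ 0) {f g : A}
    (hprime : ∀ p : ℕ, p.Prime → p ∣ N → HasTrivialSyzygiesMod (p : A) f g) {n : ℕ}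
    (hn : n ∣ N) : HasTrivialSyzygiesMod (n : A) f g := by
  induction n using Nat.recOnMul with
  | zero => exact absurd (zero_dvd_iff.mp hn) hN
  | one => simpa only [Nat.cast_one] using hasTrivialSyzygiesMod_one
  | prime p hp => exact hprime p hp hn
  | mul a b iha ihb =>
    rw [Nat.cast_mul]
    exact .mul (natCast_dvd_of_mul_dvd_mul hN hn) (iha (dvd_of_mul_right_dvd hn))
      (ihb (dvd_of_mul_left_dvd hn))

theorem HasTrivialSyzygies.mod_natCast [IsNoetherianRing A] (hN : N ≠ 0) {f g : A}
    (hfg : HasTrivialSyzygies f g) {d : ℕ} (hd : d ∣ N) : HasTrivialSyzygiesMod (d : A) f g := by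
  obtain ⟨m, hm⟩ := hd
  have mul_eq_zero : (d * m : A) = 0 := by
    rw [← Nat.cast_mul, ← hm, natCast_eq_zero_of_zmodAlgebra]
  exact hfg.mod mul_eq_zero (natCast_dvd_of_mul_eq_zero hN hm.symm)
    (natCast_dvd_of_mul_eq_zero hN (by rw [hm, mul_comm]))

theorem stmt0_general [IsNoetherianRing A] (hN : N ≠ 0) (f g : A) :
    HasTrivialSyzygies f g ↔ ∀ p : ℕ, p.Prime → p ∣ N →
      HasTrivialSyzygies (Ideal.Quotient.mk (Ideal.span {(p : A)}) f)
        (Ideal.Quotient.mk (Ideal.span {(p : A)}) g) := by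
  simp only [hasTrivialSyzygies_mk_iff]
  refine ⟨fun hfg p _ hp => hfg.mod_natCast hN hp, fun hprime => ?_⟩
  rw [← hasTrivialSyzygiesMod_zero, ← natCast_eq_zero_of_zmodAlgebra (N := N) A]
  exact hasTrivialSyzygiesMod_of_forall_prime hN hprime dvd_rfl

end FlatAlgebra

section Reduction

theorem addMonoidAlgebra_ker_mapRingHom {R S G : Type*} [Semiring R] [Semiring S]
    [AddMonoid G] (φ : R →+* S) :
    RingHom.ker (AddMonoidAlgebra.mapRingHom G φ) =
      (RingHom.ker φ).map (AddMonoidAlgebra.singleZeroRingHom (R := R) (M := G)) := by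
  refine le_antisymm (fun x hx => ?_) (Ideal.map_le_iff_le_comap.mpr fun c hc => ?_)
  · rw [← AddMonoidAlgebra.sum_coeff_single x]
    refine sum_mem fun m _ => ?_
    have coeff_mem : x.coeff m ∈ RingHom.ker φ := by
      rw [RingHom.mem_ker, ← AddMonoidAlgebra.coeff_mapRingHom, hx]
      rfl
    have single_eq : AddMonoidAlgebra.single m (x.coeff m) =
        AddMonoidAlgebra.single m 1 * AddMonoidAlgebra.singleZeroRingHom (x.coeff m) := by
      simp [AddMonoidAlgebra.single_mul_single]
    rw [single_eq]
    exact Ideal.mul_mem_left _ _ (Ideal.mem_map_of_mem _ coeff_mem)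
  · simp [RingHom.mem_ker.mp hc]

theorem ker_zmodCastHom {N d : ℕ} (h : d ∣ N) :
    RingHom.ker (ZMod.castHom h (ZMod d)) = Ideal.span {(d : ZMod N)} := by
  refine le_antisymm (fun c hc => ?_) ((Ideal.span_singleton_le_iff_mem _).mpr (by simp))
  obtain ⟨k, rfl⟩ := ZMod.intCast_surjective c
  rw [RingHom.mem_ker, map_intCast, ZMod.intCast_zmod_eq_zero_iff_dvd] at hc
  exact Ideal.mem_span_singleton.mpr
    (by simpa using map_dvd (Int.castRingHom (ZMod N)) hc)

variable {N p : ℕ}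

theorem red_eq_mapRingHom (h : p ∣ N) :
    red N p h = AddMonoidAlgebra.mapRingHom (ℤ × ℤ) (ZMod.castHom h (ZMod p)) := by
  ext <;> simp [red]

theorem red_surjective (h : p ∣ N) : Function.Surjective (red N p h) := by
  rw [red_eq_mapRingHom]
  exact AddMonoidAlgebra.map_surjective _ (ZMod.castHom_surjective h)

theorem ker_red (h : p ∣ N) : RingHom.ker (red N p h) = Ideal.span {(p : RR N)} := by
  rw [red_eq_mapRingHom, addMonoidAlgebra_ker_mapRingHom, ker_zmodCastHom, Ideal.map_span,
    Set.image_singleton, map_natCast]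

theorem isTopological_red_iff (h : p ∣ N) (f g : RR N) :
    IsTopological (red N p h f) (red N p h g) ↔
      HasTrivialSyzygies (Ideal.Quotient.mk (Ideal.span {(p : RR N)}) f)
        (Ideal.Quotient.mk (Ideal.span {(p : RR N)}) g) :=
  (hasTrivialSyzygies_map_iff (red_surjective h) (ker_red h)).trans
    hasTrivialSyzygies_mk_iff.symm

instance isNoetherianRing_RR : IsNoetherianRing (RR N) :=
  have : IsNoetherianRing (ZMod N) :=
    isNoetherianRing_of_surjective ℤ _ (Int.castRingHom _) ZMod.intCast_surjective
  Algebra.FiniteType.isNoetherianRing (ZMod N) (RR N)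

end Reduction

theorem stmt0 (N : ℕ) (hN : 0 < N) (f g : RR N) :
    IsTopological f g ↔
      ∀ (p : ℕ) (hp : p.Prime) (hpN : p ∣ N),
        IsTopological (red N p hpN f) (red N p hpN g) := by
  simp only [isTopological_red_iff]
  exact stmt0_general hN.ne' f g
end

section
/- Let N be a positive integer and f, g ∈ R_N. The code BB_N(f,g) is topological if and only if the quotient ring R_N ⧸ Ideal.span {f, g} is a finite set. -/
/-!
For a pair in a Noetherian local ring, exactness of the Koszul complex in degree one says that the
pair is a regular sequence as soon as it lies in the maximal ideal. Localizing, an exact pair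
generates an ideal of height at least two, and `k[X^{±1}, Y^{±1}]` has dimension at most two when
`k` is Artinian, so the quotient by this ideal is zero-dimensional, that is, finite over `k`.

Conversely, if the quotient by `(f, g)` is finite over `k`, then `X` and `Y` are integral modulo
`(f, g)`, which therefore contains monic polynomials `p(X)` and `q(Y)`. These form a regular
sequence, and exactness passes from `(p, q)` to `(f, g)`.
-/

open Polynomial nonZeroDivisors LaurentPolynomial

/-- Exactness of the Koszul complex of `(f, g)` in degree one: every syzygy is a multiple of the
Koszul syzygy `(g, -f)`. For Laurent polynomials over `ZMod N` this is `IsTopological`. -/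
def KoszulExact {A : Type*} [CommRing A] (f g : A) : Prop :=
  ∀ r s : A, r * f + s * g = 0 → ∃ h : A, r = h * g ∧ s = -(h * f)

namespace KoszulExact

variable {A B : Type*} [CommRing A] [CommRing B] {f g : A}

theorem of_ringEquiv (e : A ≃+* B) (h : KoszulExact (e f) (e g)) : KoszulExact f g := by
  intro r s hrs
  obtain ⟨k, hr, hs⟩ := h (e r) (e s) (by rw [← map_mul, ← map_mul, ← map_add, hrs, map_zero])
  exact ⟨e.symm k, e.injective (by simpa using hr), e.injective (by simpa using hs)⟩

theorem map_of_isLocalization [Algebra A B] (S : Submonoid A) [IsLocalization S B]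
    (h : KoszulExact f g) : KoszulExact (algebraMap A B f) (algebraMap A B g) := by
  intro r s hrs
  obtain ⟨r', s', t, hr, hs⟩ := IsLocalization.surj₂ S B r s
  obtain ⟨c, hc⟩ := (IsLocalization.map_eq_zero_iff S B (r' * f + s' * g)).1 (by
    simp only [map_add, map_mul, ← hr, ← hs]
    linear_combination algebraMap A B t * hrs)
  obtain ⟨k, hkr, hks⟩ := h (c * r') (c * s') (by linear_combination hc)
  have hct : IsUnit (algebraMap A B (c * t : S)) := IsLocalization.map_units B (c * t)
  have hkr' := congrArg (algebraMap A B) hkr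
  have hks' := congrArg (algebraMap A B) hks
  simp only [map_mul, map_neg, ← hr, ← hs] at hkr' hks'
  refine ⟨IsLocalization.mk' B k (c * t), hct.mul_left_cancel ?_, hct.mul_left_cancel ?_⟩
  · rw [← mul_assoc, IsLocalization.mk'_spec', Submonoid.coe_mul, map_mul]
    linear_combination hkr'
  · rw [mul_neg, ← mul_assoc, IsLocalization.mk'_spec', Submonoid.coe_mul, map_mul]
    linear_combination hks'

theorem of_mem_span {a b : A} (h : KoszulExact a b) (ha₀ : a ∈ A⁰)
    (ha : a ∈ Ideal.span {f, g}) (hb : b ∈ Ideal.span {f, g}) : KoszulExact f g := by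
  intro r s hrs
  obtain ⟨u, v, rfl⟩ := Ideal.mem_span_pair.1 ha
  obtain ⟨u', v', rfl⟩ := Ideal.mem_span_pair.1 hb
  have hr : (u * f + v * g) * r = (v * r - u * s) * g := by linear_combination u * hrs
  have hs : (u * f + v * g) * s = -((v * r - u * s) * f) := by linear_combination v * hrs
  obtain ⟨l, -, hl⟩ := h (v' * r - u' * s) (-(v * r - u * s)) (by
    linear_combination (u * v' - v * u') * hrs)
  rw [neg_inj] at hl
  refine ⟨l, ?_, ?_⟩ <;> refine (mul_cancel_left_mem_nonZeroDivisors ha₀).1 ?_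
  · linear_combination hr + g * hl
  · linear_combination hs - f * hl

theorem mk_mem_nonZeroDivisors (h : KoszulExact f g) :
    Ideal.Quotient.mk (Ideal.span {f}) g ∈ (A ⧸ Ideal.span {f})⁰ := by
  refine mem_nonZeroDivisors_iff_right.2 fun s hs ↦ ?_
  obtain ⟨s, rfl⟩ := Ideal.Quotient.mk_surjective s
  rw [← map_mul, Ideal.Quotient.eq_zero_iff_dvd] at hs
  obtain ⟨r, hr⟩ := hs
  obtain ⟨k, -, rfl⟩ := h (-r) s (by linear_combination hr)
  exact (Ideal.Quotient.eq_zero_iff_dvd _ _).2 ⟨-k, by ring⟩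

section IsLocalRing

variable [IsNoetherianRing A] [IsLocalRing A]

theorem mem_nonZeroDivisors (h : KoszulExact f g) (hg : g ∈ IsLocalRing.maximalIdeal A) :
    f ∈ A⁰ := by
  let K : Ideal A := LinearMap.ker (LinearMap.mulRight A f)
  have mem_K (x : A) : x ∈ K ↔ x * f = 0 := LinearMap.mem_ker
  have hK : K ≤ IsLocalRing.maximalIdeal A • K := by
    intro x hx
    obtain ⟨k, rfl, hk⟩ := h x 0 (by simpa [mem_K] using hx)
    rw [mul_comm]
    exact Submodule.smul_mem_smul hg ((mem_K k).2 (neg_eq_zero.1 hk.symm))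
  have hK₀ : K = ⊥ := Submodule.eq_bot_of_le_smul_of_le_jacobson_bot _ K
    (IsNoetherian.noetherian K) hK (IsLocalRing.maximalIdeal_le_jacobson ⊥)
  refine mem_nonZeroDivisors_iff_right.2 fun x hx ↦ ?_
  rwa [← mem_K, hK₀] at hx

theorem two_le_ringKrullDim (h : KoszulExact f g) (hf : f ∈ IsLocalRing.maximalIdeal A)
    (hg : g ∈ IsLocalRing.maximalIdeal A) : 2 ≤ ringKrullDim A := by
  have hfm : Ideal.span {f} ≤ IsLocalRing.maximalIdeal A := by simpa using hf
  have hdim : ringKrullDim (IsLocalRing.ResidueField A) + 1 ≤ ringKrullDim (A ⧸ Ideal.span {f}) :=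
    ringKrullDim_succ_le_of_surjective (Ideal.Quotient.factor hfm)
      (Ideal.Quotient.factor_surjective hfm) h.mk_mem_nonZeroDivisors
      (Ideal.Quotient.eq_zero_iff_mem.2 hg)
  rw [ringKrullDim_eq_zero_of_field, zero_add] at hdim
  calc (2 : WithBot ℕ∞) = 1 + 1 := one_add_one_eq_two.symm
    _ ≤ ringKrullDim (A ⧸ Ideal.span {f}) + 1 := by gcongr
    _ ≤ ringKrullDim A :=
      ringKrullDim_quotient_succ_le_of_nonZeroDivisor (h.mem_nonZeroDivisors hg)

end IsLocalRing

variable [IsNoetherianRing A]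

theorem two_le_height (h : KoszulExact f g) : 2 ≤ (Ideal.span {f, g}).height := by
  rw [Ideal.height_eq_inf_minimalPrimes]
  refine le_iInf₂ fun P hP ↦ ?_
  have : P.IsPrime := hP.1.1
  have hmem (x : A) (hx : x ∈ ({f, g} : Set A)) :
      algebraMap A (Localization.AtPrime P) x ∈ IsLocalRing.maximalIdeal _ :=
    (IsLocalization.AtPrime.to_map_mem_maximal_iff _ P x).2 (hP.1.2 (Ideal.subset_span hx))
  have hloc := h.map_of_isLocalization (B := Localization.AtPrime P) P.primeCompl
  have hdim := hloc.two_le_ringKrullDim (hmem f (by simp)) (hmem g (by simp))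
  rw [IsLocalization.AtPrime.ringKrullDim_eq_height P] at hdim
  exact WithBot.coe_le_coe.1 hdim

end KoszulExact

theorem krullDimLE_zero_quotient_of_ringKrullDim_le_height {A : Type*} [CommRing A] {I : Ideal A}
    {n : ℕ} (hA : ringKrullDim A ≤ n) (hI : n ≤ I.height) : Ring.KrullDimLE 0 (A ⧸ I) := by
  rw [Ideal.krullDimLE_zero_quotient_iff_forall_minimalPrimes_isMaximal]
  intro P hP
  have : P.IsPrime := hP.1.1
  have hnP : (n : WithBot ℕ∞) ≤ P.height := by exact_mod_cast hI.trans (Ideal.height_mono hP.1.2)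
  have hPA : P.height ≤ ringKrullDim A := Ideal.height_le_ringKrullDim_of_isPrime
  have : FiniteRingKrullDim A := finiteRingKrullDim_iff_ne_bot_and_top.2
    ⟨ne_bot_of_le_ne_bot (WithBot.natCast_ne_bot n) (hnP.trans hPA),
      ne_top_of_le_ne_top (WithBot.coe_injective.ne (ENat.natCast_ne_top n)) hA⟩
  exact Ideal.isMaximal_of_height_eq_ringKrullDim (hPA.antisymm (hA.trans hnP))

theorem ringKrullDim_of_isLocalization_le {A : Type*} (B : Type*) [CommRing A] [CommRing B]
    [Algebra A B] (S : Submonoid A) [IsLocalization S B] : ringKrullDim B ≤ ringKrullDim A := by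
  rw [ringKrullDim_le_iff_height_le]
  intro P hP
  rw [← IsLocalization.height_under S P]
  exact Ideal.height_le_ringKrullDim_of_isPrime

section LaurentPolynomial

variable {R : Type*} [CommRing R]

theorem ringKrullDim_laurentPolynomial_le [IsNoetherianRing R] :
    ringKrullDim R[T;T⁻¹] ≤ ringKrullDim R + 1 :=
  (ringKrullDim_of_isLocalization_le _ (.powers (X : R[X]))).trans_eq
    Polynomial.ringKrullDim_of_isNoetherianRing

theorem toLaurent_mem_nonZeroDivisors_of_monic {p : R[X]} (hp : p.Monic) :
    toLaurent p ∈ R[T;T⁻¹]⁰ :=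
  IsLocalization.map_nonZeroDivisors_le (.powers X) R[T;T⁻¹]
    (Submonoid.mem_map_of_mem _ hp.mem_nonZeroDivisors)

theorem aeval_T_one (p : R[X]) : aeval (T 1 : R[T;T⁻¹]) p = toLaurent p := by
  rw [← toLaurent_X, ← toLaurentAlg_apply, aeval_algHom_apply, aeval_X_left_apply,
    toLaurentAlg_apply]

theorem koszulExact_C_of_monic {p : R[X]} (hp : p.Monic) {b : R} (hb : b ∈ R⁰) :
    KoszulExact p (Polynomial.C b) := by
  intro r s hrs
  let φ : R[X] →+* (R ⧸ Ideal.span {b})[X] := mapRingHom (Ideal.Quotient.mk (Ideal.span {b}))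
  have hφ (x : R[X]) : φ x = 0 ↔ Polynomial.C b ∣ x := by
    simp [φ, Polynomial.C_dvd_iff_dvd_coeff, Polynomial.ext_iff, Ideal.Quotient.eq_zero_iff_dvd]
  have hφr : φ r * φ p = 0 := by
    rw [← map_mul, hφ]
    exact ⟨-s, by linear_combination hrs⟩
  obtain ⟨h, rfl⟩ :=
    (hφ r).1 ((mul_right_mem_nonZeroDivisors_eq_zero_iff (hp.map _).mem_nonZeroDivisors).1 hφr)
  have hs : b • (s + h * p) = 0 := by
    rw [Polynomial.smul_eq_C_mul]
    linear_combination hrs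
  refine ⟨h, mul_comm _ _, eq_neg_of_add_eq_zero_left (Polynomial.ext fun n ↦ ?_)⟩
  refine (mul_left_mem_nonZeroDivisors_eq_zero_iff hb).1 ?_
  rw [← smul_eq_mul, ← coeff_smul, hs, coeff_zero]

theorem koszulExact_toLaurent_C_of_monic {p : R[X]} (hp : p.Monic) {b : R} (hb : b ∈ R⁰) :
    KoszulExact (toLaurent p) (LaurentPolynomial.C b) := by
  rw [← Polynomial.toLaurent_C]
  exact (koszulExact_C_of_monic hp hb).map_of_isLocalization (.powers X)

end LaurentPolynomial

theorem exists_monic_aeval_mem_of_finite_quotient {R A : Type*} [CommRing R] [CommRing A]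
    [Algebra R A] (I : Ideal A) [Module.Finite R (A ⧸ I)] (x : A) :
    ∃ p : R[X], p.Monic ∧ aeval x p ∈ I := by
  obtain ⟨p, hp, hpx⟩ := IsIntegral.of_finite R (Ideal.Quotient.mkₐ R I x)
  refine ⟨p, hp, Ideal.Quotient.eq_zero_iff_mem.1 ?_⟩
  rwa [← aeval_def, aeval_algHom_apply] at hpx

section TwoVariables

open AddMonoidAlgebra

variable {k : Type*} [CommRing k]

theorem ringKrullDim_laurent_two_le [IsNoetherianRing k] :
    ringKrullDim (AddMonoidAlgebra k (ℤ × ℤ)) ≤ ringKrullDim k + 2 := by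
  have : IsNoetherianRing k[T;T⁻¹] := Algebra.FiniteType.isNoetherianRing k _
  calc ringKrullDim (AddMonoidAlgebra k (ℤ × ℤ))
    _ = ringKrullDim k[T;T⁻¹][T;T⁻¹] := ringKrullDim_eq_of_ringEquiv curryRingEquiv
    _ ≤ ringKrullDim k[T;T⁻¹] + 1 := ringKrullDim_laurentPolynomial_le
    _ ≤ ringKrullDim k + 1 + 1 := by gcongr; exact ringKrullDim_laurentPolynomial_le
    _ = ringKrullDim k + 2 := by rw [add_assoc, one_add_one_eq_two]

theorem curryAlgEquiv_aeval_left (p : k[X]) :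
    curryAlgEquiv k (aeval (single ((1 : ℤ), (0 : ℤ)) (1 : k)) p) =
      toLaurent (p.map (algebraMap k k[T;T⁻¹])) := by
  rw [← aeval_T_one, aeval_map_algebraMap, ← AlgEquiv.coe_toAlgHom, ← aeval_algHom_apply,
    AlgEquiv.coe_toAlgHom, curryAlgEquiv_single]
  rfl

theorem curryAlgEquiv_aeval_right (q : k[X]) :
    curryAlgEquiv k (aeval (single ((0 : ℤ), (1 : ℤ)) (1 : k)) q) =
      LaurentPolynomial.C (toLaurent q) := by
  rw [← aeval_T_one, LaurentPolynomial.C_eq_algebraMap, ← aeval_algebraMap_apply,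
    ← AlgEquiv.coe_toAlgHom, ← aeval_algHom_apply, AlgEquiv.coe_toAlgHom, curryAlgEquiv_single]
  rfl

theorem aeval_single_left_mem_nonZeroDivisors_of_monic {p : k[X]} (hp : p.Monic) :
    aeval (single ((1 : ℤ), (0 : ℤ)) (1 : k)) p ∈ (AddMonoidAlgebra k (ℤ × ℤ))⁰ := by
  refine mem_nonZeroDivisors_of_injective (f := curryAlgEquiv k) (curryAlgEquiv k).injective ?_
  rw [curryAlgEquiv_aeval_left]
  exact toLaurent_mem_nonZeroDivisors_of_monic (hp.map _)

theorem koszulExact_aeval_of_monic {p q : k[X]} (hp : p.Monic) (hq : q.Monic) :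
    KoszulExact (aeval (single ((1 : ℤ), (0 : ℤ)) (1 : k)) p)
      (aeval (single ((0 : ℤ), (1 : ℤ)) (1 : k)) q) := by
  have h := koszulExact_toLaurent_C_of_monic (hp.map (algebraMap k k[T;T⁻¹]))
    (toLaurent_mem_nonZeroDivisors_of_monic hq)
  rw [← curryAlgEquiv_aeval_left, ← curryAlgEquiv_aeval_right] at h
  exact KoszulExact.of_ringEquiv (curryAlgEquiv k).toRingEquiv h

theorem koszulExact_of_finite_quotient (f g : AddMonoidAlgebra k (ℤ × ℤ))
    [Module.Finite k (AddMonoidAlgebra k (ℤ × ℤ) ⧸ Ideal.span {f, g})] : KoszulExact f g := by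
  obtain ⟨p, hp, hpI⟩ := exists_monic_aeval_mem_of_finite_quotient (R := k) (Ideal.span {f, g})
    (single (1, 0) 1)
  obtain ⟨q, hq, hqI⟩ := exists_monic_aeval_mem_of_finite_quotient (R := k) (Ideal.span {f, g})
    (single (0, 1) 1)
  exact (koszulExact_aeval_of_monic hp hq).of_mem_span
    (aeval_single_left_mem_nonZeroDivisors_of_monic hp) hpI hqI

theorem stmt1_general [IsArtinianRing k] (f g : AddMonoidAlgebra k (ℤ × ℤ)) :
    KoszulExact f g ↔ Module.Finite k (AddMonoidAlgebra k (ℤ × ℤ) ⧸ Ideal.span {f, g}) := by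
  refine ⟨fun h ↦ ?_, fun _ ↦ koszulExact_of_finite_quotient f g⟩
  have hk : ringKrullDim k ≤ 0 := Ring.krullDimLE_iff.1 inferInstance
  have : IsNoetherianRing (AddMonoidAlgebra k (ℤ × ℤ)) := Algebra.FiniteType.isNoetherianRing k _
  rw [Module.finite_iff_krullDimLE_zero]
  refine krullDimLE_zero_quotient_of_ringKrullDim_le_height (n := 2) ?_ h.two_le_height
  calc _ ≤ ringKrullDim k + 2 := ringKrullDim_laurent_two_le
    _ ≤ 0 + 2 := by gcongr
    _ = 2 := zero_add _

end TwoVariables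

theorem stmt1 (N : ℕ) (hN : 0 < N) (f g : RR N) :
    IsTopological f g ↔ Finite (RR N ⧸ Ideal.span {f, g}) := by
  have : NeZero N := ⟨hN.ne'⟩
  exact (stmt1_general f g).trans Module.finite_iff_finite
end

section
/- McCoy's theorem for Laurent polynomial rings: let S be a commutative ring, m ≥ 1, and h an element of the Laurent polynomial ring in m variables over S, realized as AddMonoidAlgebra S (Fin m → ℤ). Then there exists a nonzero k in this ring with h * k = 0 if and only if there exists a nonzero element s ∈ S with s • h = 0. -/
/-!
Among the nonzero `k` with `h * k = 0`, one with the fewest terms is annihilated by every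
coefficient of `h`, so any nonzero coefficient of `k` annihilates `h`. Indeed, suppose that some
coefficient of `h` does not annihilate `k`. Since `Fin m → ℤ` has unique sums, some `a + b`, with
`a` an exponent of `h` such that `h.coeff a • k ≠ 0` and `b` an exponent of `k`, arises from no
other such pair. The remaining terms of `h` contribute nothing to `h * k`, so
`h.coeff a * k.coeff b = 0`, and `h.coeff a • k` is a nonzero annihilator of `h` with fewer terms.
-/

open AddMonoidAlgebra Finset

section Semiring

variable {R A : Type*} [Semiring R] {f g : AddMonoidAlgebra R A}

theorem card_support_coeff_smul_lt {r : R} {b : A} (hb : g.coeff b ≠ 0) (hrb : r * g.coeff b = 0) :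
    #(r • g).coeff.support < #g.coeff.support :=
  card_lt_card <| (ssubset_iff_of_subset Finsupp.support_smul).2
    ⟨b, Finsupp.mem_support_iff.2 hb, Finsupp.notMem_support_iff.2 hrb⟩

variable [Add A]

theorem coeff_mul_add_of_forall_mul_ne_zero {a b : A}
    (hab : ∀ a' b', f.coeff a' * g.coeff b' ≠ 0 → a' + b' = a + b → a' = a ∧ b' = b) :
    (f * g).coeff (a + b) = f.coeff a * g.coeff b := by
  classical
  have hzero : ∀ a' b', ¬(a' = a ∧ b' = b) →
      (if a' + b' = a + b then f.coeff a' * g.coeff b' else 0) = 0 := fun a' b' hne ↦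
    ite_eq_right_iff.2 fun hsum ↦ by_contra fun h0 ↦ hne (hab a' b' h0 hsum)
  rw [coeff_mul, Finsupp.sum, sum_eq_single a, Finsupp.sum, sum_eq_single b, if_pos rfl]
  · exact fun b' _ hb' ↦ hzero a b' fun h ↦ hb' h.2
  · simp +contextual
  · exact fun a' _ ha' ↦ sum_eq_zero fun b' _ ↦ hzero a' b' fun h ↦ ha' h.1
  · simp +contextual

theorem exists_coeff_smul_ne_zero_and_coeff_mul_coeff_eq_zero [UniqueSums A] (hfg : f * g = 0)
    (hf : ∃ a, f.coeff a • g ≠ 0) :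
    ∃ a, f.coeff a • g ≠ 0 ∧ ∃ b, g.coeff b ≠ 0 ∧ f.coeff a * g.coeff b = 0 := by
  classical
  obtain ⟨a₀, ha₀⟩ := hf
  have hfs : {a ∈ f.coeff.support | f.coeff a • g ≠ 0}.Nonempty :=
    ⟨a₀, by simpa using ⟨left_ne_zero_of_smul ha₀, ha₀⟩⟩
  have hgs : g.coeff.support.Nonempty := by simpa using right_ne_zero_of_smul ha₀
  obtain ⟨a, ha, b, hb, hunique⟩ := UniqueSums.uniqueAdd_of_nonempty hfs hgs
  refine ⟨a, (mem_filter.1 ha).2, b, Finsupp.mem_support_iff.1 hb, ?_⟩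
  rw [← coeff_mul_add_of_forall_mul_ne_zero, hfg, coeff_zero, Finsupp.zero_apply]
  intro a' b' hne
  have hsmul : f.coeff a' • g ≠ 0 := fun h0 ↦ hne (congrArg (fun p ↦ p.coeff b') h0)
  exact hunique (mem_filter.2 ⟨Finsupp.mem_support_iff.2 (left_ne_zero_of_mul hne), hsmul⟩)
    (Finsupp.mem_support_iff.2 (right_ne_zero_of_mul hne))

end Semiring

section CommSemiring

variable {R A : Type*} [CommSemiring R] {f g : AddMonoidAlgebra R A}

theorem forall_coeff_smul_eq_zero_comm :
    (∀ a, f.coeff a • g = 0) ↔ ∀ b, g.coeff b • f = 0 := by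
  simp only [AddMonoidAlgebra.ext_iff, DFunLike.ext_iff, coeff_smul, coeff_zero, Finsupp.smul_apply,
    Finsupp.zero_apply, smul_eq_mul]
  rw [forall_comm]
  simp only [mul_comm]

variable [Add A]

theorem exists_ne_zero_forall_coeff_smul_eq_zero [UniqueSums A] (hg : g ≠ 0) (hfg : f * g = 0) :
    ∃ k : AddMonoidAlgebra R A, k ≠ 0 ∧ ∀ a, f.coeff a • k = 0 := by
  obtain ⟨k, ⟨hk, hfk⟩, hmin⟩ := exists_minimalFor_of_wellFoundedLT
    (fun k : AddMonoidAlgebra R A ↦ k ≠ 0 ∧ f * k = 0) (fun k ↦ #k.coeff.support) ⟨g, hg, hfg⟩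
  refine ⟨k, hk, ?_⟩
  by_contra! hf
  obtain ⟨a, ha, b, hb, hab⟩ := exists_coeff_smul_ne_zero_and_coeff_mul_coeff_eq_zero hfk hf
  have hlt : #(f.coeff a • k).coeff.support < #k.coeff.support := card_support_coeff_smul_lt hb hab
  have hfak : f * f.coeff a • k = 0 := by rw [mul_smul_comm, hfk, smul_zero]
  exact hlt.not_ge (hmin ⟨ha, hfak⟩ hlt.le)

theorem exists_ne_zero_smul_eq_zero_of_mul_eq_zero [UniqueSums A] (hg : g ≠ 0) (hfg : f * g = 0) :
    ∃ r : R, r ≠ 0 ∧ r • f = 0 := by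
  obtain ⟨k, hk, hfk⟩ := exists_ne_zero_forall_coeff_smul_eq_zero hg hfg
  obtain ⟨b, hb⟩ : ∃ b, k.coeff b ≠ 0 := Finsupp.ne_iff.1 (mt coeff_eq_zero.1 hk)
  exact ⟨k.coeff b, hb, forall_coeff_smul_eq_zero_comm.1 hfk b⟩

theorem mul_single_eq_zero_of_smul_eq_zero {r : R} (hr : r • f = 0) (a : A) :
    f * single a r = 0 :=
  calc
    f * single a r = f * r • single a 1 := by rw [smul_single, smul_eq_mul, mul_one]
    _ = r • f * single a 1 := by rw [mul_smul_comm, smul_mul_assoc]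
    _ = 0 := by rw [hr, zero_mul]

end CommSemiring

theorem stmt4_general {R A : Type*} [CommSemiring R] [Add A] [UniqueSums A] [Nonempty A]
    (f : AddMonoidAlgebra R A) :
    (∃ g : AddMonoidAlgebra R A, g ≠ 0 ∧ f * g = 0) ↔ ∃ r : R, r ≠ 0 ∧ r • f = 0 := by
  constructor
  · rintro ⟨g, hg, hfg⟩
    exact exists_ne_zero_smul_eq_zero_of_mul_eq_zero hg hfg
  · rintro ⟨r, hr, hrf⟩
    obtain ⟨a⟩ := ‹Nonempty A›
    exact ⟨single a r, single_ne_zero.2 hr, mul_single_eq_zero_of_smul_eq_zero hrf a⟩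

/-- McCoy's theorem for Laurent polynomial rings: a Laurent polynomial `h` in `m` variables
over a commutative ring `S` is a zero divisor iff it is annihilated by a nonzero scalar. -/
theorem stmt4 (S : Type*) [CommRing S] (m : ℕ) (hm : 1 ≤ m)
    (h : AddMonoidAlgebra S (Fin m → ℤ)) :
    (∃ k : AddMonoidAlgebra S (Fin m → ℤ), k ≠ 0 ∧ h * k = 0) ↔
      (∃ s : S, s ≠ 0 ∧ s • h = 0) :=
  stmt4_general h
end

section
/- Let p be a prime, k ≥ 1, and f, g ∈ R_{p^k}. If the code BB_{p^k}(f,g) is topological, then it is not the case that both f and g lie in the ideal generated by the constant p, i.e., f ∉ Ideal.span {(p : R_{p^k})} or g ∉ Ideal.span {(p : R_{p^k})}. -/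
/-!
If every syzygy of `(f, g)` is a multiple of `(g, -f)`, then an annihilator `r` of `f`, viewed as
the syzygy `(r, 0)`, has the form `r = h * g` where `h` again annihilates `f`. Iterating, `r` is
divisible by every power of `g`, so nilpotency of `g` makes `f` a nonzerodivisor. In a nontrivial
ring `f` is then not nilpotent, whereas all multiples of `p` are nilpotent in characteristic
`p ^ k`.
-/

theorem not_isNilpotent_of_mem_nonZeroDivisors {M₀ : Type*} [MonoidWithZero M₀] [Nontrivial M₀]
    {a : M₀} (ha : a ∈ nonZeroDivisors M₀) : ¬IsNilpotent a := by
  rintro ⟨n, hn⟩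
  exact zero_notMem_nonZeroDivisors (hn ▸ pow_mem ha n)

theorem isNilpotent_of_mem_span_natCast {R : Type*} [CommSemiring R] {p k : ℕ} [CharP R (p ^ k)]
    {a : R} (ha : a ∈ Ideal.span {(p : R)}) : IsNilpotent a := by
  have hp : (p : R) ^ k = 0 := by rw [← Nat.cast_pow, CharP.cast_eq_zero]
  exact ⟨k, zero_dvd_iff.mp (hp ▸ pow_dvd_pow_of_dvd (Ideal.mem_span_singleton.mp ha) k)⟩

instance charP_addMonoidAlgebra {R M : Type*} [CommRing R] [AddMonoid M] (n : ℕ) [CharP R n] :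
    CharP (AddMonoidAlgebra R M) n :=
  charP_of_injective_algebraMap' R n

section Koszul

variable {R : Type*} [CommRing R] {f g : R}

/-- Exactness in the middle term of the Koszul complex `R → R² → R` of `(f, g)`: every syzygy of
`(f, g)` is a multiple of the trivial syzygy `(g, -f)`. It is `IsTopological` over an arbitrary
commutative ring, written so that the two agree definitionally on `RR N`. -/
def IsKoszulExact (f g : R) : Prop :=
  ∀ r s : R, r * f + s * g = 0 → ∃ h : R, r = h * g ∧ s = -(h * f)

namespace IsKoszulExact

theorem exists_eq_mul_of_mul_eq_zero (hfg : IsKoszulExact f g) {r : R} (hr : r * f = 0) :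
    ∃ h : R, h * f = 0 ∧ r = h * g := by
  obtain ⟨h, hrh, hf⟩ := hfg r 0 (by rw [hr, zero_mul, add_zero])
  exact ⟨h, neg_eq_zero.mp hf.symm, hrh⟩

theorem pow_dvd_of_mul_eq_zero (hfg : IsKoszulExact f g) (n : ℕ) {r : R} (hr : r * f = 0) :
    g ^ n ∣ r := by
  induction n generalizing r with
  | zero => rw [pow_zero]; exact one_dvd r
  | succ n ih =>
    obtain ⟨h, hf, rfl⟩ := hfg.exists_eq_mul_of_mul_eq_zero hr
    rw [pow_succ]
    exact mul_dvd_mul_right (ih hf) g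

theorem mem_nonZeroDivisors_of_isNilpotent (hfg : IsKoszulExact f g) (hg : IsNilpotent g) :
    f ∈ nonZeroDivisors R := by
  obtain ⟨n, hn⟩ := hg
  refine mem_nonZeroDivisors_iff_right.mpr fun r hr => ?_
  exact zero_dvd_iff.mp (hn ▸ hfg.pow_dvd_of_mul_eq_zero n hr)

end IsKoszulExact

theorem stmt5_general [Nontrivial R] (hfg : IsKoszulExact f g) :
    ¬IsNilpotent f ∨ ¬IsNilpotent g :=
  or_iff_not_imp_right.mpr fun hg =>
    not_isNilpotent_of_mem_nonZeroDivisors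
      (hfg.mem_nonZeroDivisors_of_isNilpotent (not_not.mp hg))

end Koszul

theorem stmt5 (p k : ℕ) (hp : p.Prime) (hk : 1 ≤ k) (f g : RR (p ^ k))
    (htopo : IsTopological f g) :
    f ∉ Ideal.span {(p : RR (p ^ k))} ∨ g ∉ Ideal.span {(p : RR (p ^ k))} := by
  have : Nontrivial (RR (p ^ k)) :=
    CharP.nontrivial_of_char_ne_one (Nat.one_lt_pow (Nat.one_le_iff_ne_zero.mp hk) hp.one_lt).ne'
  exact (stmt5_general htopo).imp (mt isNilpotent_of_mem_span_natCast)
    (mt isNilpotent_of_mem_span_natCast)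
end

section
/- Let N, L_x, L_y be positive integers, let R_L = AddMonoidAlgebra (ZMod N) (ZMod L_x × ZMod L_y) (the Laurent polynomial ring over ZMod N with periodic boundary conditions x^{L_x} = y^{L_y} = 1), and let bar denote the ring automorphism of R_L induced by negation on the group ZMod L_x × ZMod L_y (i.e., x ↦ x^{-1}, y ↦ y^{-1}). Then for all f, g ∈ R_L, the cardinality of the annihilator {r ∈ R_L | (bar f) * r = 0 ∧ (bar g) * r = 0} equals the cardinality of the quotient R_L ⧸ Ideal.span {f, g}. -/
/-- The torus Laurent polynomial ring `(ZMod N)[x^{±1}, y^{±1}]/(x^{L_x}-1, y^{L_y}-1)`. -/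
abbrev RL (N Lx Ly : ℕ) : Type := AddMonoidAlgebra (ZMod N) (ZMod Lx × ZMod Ly)

/-- The ring endomorphism `bar` induced by negation on exponents, `x ↦ x⁻¹`, `y ↦ y⁻¹`. -/
noncomputable def bar (N Lx Ly : ℕ) : RL N Lx Ly →+* RL N Lx Ly :=
  AddMonoidAlgebra.mapDomainRingHom (ZMod N)
    (negAddMonoidHom : ZMod Lx × ZMod Ly →+ ZMod Lx × ZMod Ly)

/-! A primitive character `ψ` of a finite commutative ring `R` makes `(r, a) ↦ ψ (r * a)` a perfect
pairing. Summing it over `r : R` and `a ∈ I` in the two possible orders gives `|Ann I| * |I| = |R|`,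
so `|Ann I| = |R ⧸ I|`. A primitive character of `A`, composed with the coefficient at `0`, is
primitive on the group algebra `A[G]`. Finally, `bar f * r = 0 = bar g * r` says that `r`
annihilates the image of `(f, g)` under an automorphism, whose quotient has the same size as that
of `(f, g)`. -/

section Annihilator

variable {R K : Type*} [CommRing R]

theorem mem_annihilator_iff_mulShift_eq_one [CommMonoid K] {ψ : AddChar R K} (hψ : ψ.IsPrimitive)
    (I : Ideal R) (r : R) : r ∈ I.annihilator ↔ ∀ a ∈ I, ψ.mulShift r a = 1 := by
  simp only [Submodule.mem_annihilator, smul_eq_mul, AddChar.mulShift_apply]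
  refine ⟨fun h a ha ↦ by rw [h a ha, ψ.map_zero_eq_one], fun h a ha ↦ ?_⟩
  by_contra hra
  refine hψ hra (DFunLike.ext _ _ fun x ↦ ?_)
  rw [AddChar.mulShift_apply, mul_assoc, AddChar.one_apply, h _ (I.mul_mem_right x ha)]

variable [CommRing K] [IsDomain K] {ψ : AddChar R K}

open Classical in
theorem sum_ideal_mulShift (hψ : ψ.IsPrimitive) (I : Ideal R) [Fintype I] (r : R) :
    ∑ a : I, ψ.mulShift r a = if r ∈ I.annihilator then (Fintype.card I : K) else 0 := by
  let χ : AddChar I K := (ψ.mulShift r).compAddMonoidHom I.toAddSubgroup.subtype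
  have hχ : χ = 0 ↔ r ∈ I.annihilator := by
    rw [mem_annihilator_iff_mulShift_eq_one hψ, AddChar.eq_zero_iff, Subtype.forall]
    rfl
  rw [← if_congr hχ rfl rfl, ← χ.sum_eq_ite]
  rfl

variable [Finite R] [CharZero K]

theorem card_annihilator_mul_card (hψ : ψ.IsPrimitive) (I : Ideal R) :
    Nat.card I.annihilator * Nat.card I = Nat.card R := by
  classical
  have := Fintype.ofFinite R
  apply Nat.cast_injective (R := K)
  calc ((Nat.card I.annihilator * Nat.card I : ℕ) : K)
      = ∑ r : R, ∑ a : I, ψ.mulShift r a := by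
        simp only [sum_ideal_mulShift hψ, ← Finset.sum_filter, Finset.sum_const,
          ← Fintype.card_subtype, Nat.card_eq_fintype_card, nsmul_eq_mul, Nat.cast_mul]
    _ = ∑ a : I, ∑ r : R, ψ (r * a) := Finset.sum_comm
    _ = Nat.card R := by simp [AddChar.sum_mulShift _ hψ]

theorem card_annihilator_eq_card_quotient (hψ : ψ.IsPrimitive) (I : Ideal R) :
    Nat.card I.annihilator = Nat.card (R ⧸ I) := by
  apply Nat.eq_of_mul_eq_mul_right (Nat.card_pos (α := I))
  rw [card_annihilator_mul_card hψ, mul_comm, ← Submodule.card_eq_card_quotient_mul_card]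

theorem card_setOf_map_mul_eq_zero {S : Type*} [CommRing S] (hψ : ψ.IsPrimitive) (σ : S ≃+* R)
    (s : Set S) :
    Nat.card {r : R | ∀ f ∈ s, σ f * r = 0} = Nat.card (S ⧸ Ideal.span s) := by
  have hann : {r : R | ∀ f ∈ s, σ f * r = 0} = (Ideal.span (σ '' s)).annihilator := by
    ext r
    simp [Ideal.span, Submodule.mem_annihilator_span, mul_comm]
  let quotEquiv : (S ⧸ Ideal.span s) ≃+* R ⧸ Ideal.span (σ '' s) :=
    Ideal.quotientEquiv _ _ σ (Ideal.map_span σ s).symm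
  rw [hann, Nat.card_congr quotEquiv.toEquiv]
  exact card_annihilator_eq_card_quotient hψ _

end Annihilator

section GroupAlgebra

open scoped AddMonoidAlgebra

variable {A G K : Type*} [CommRing A] [AddCommGroup G]

variable (G) in
/-- The additive character `f ↦ ψ (f₀)` of the group algebra `A[G]`, where `f₀` is the coefficient
of `f` at `0 : G`. It transfers primitivity from `A` to `A[G]`. -/
noncomputable def constCoeffAddChar [CommMonoid K] (ψ : AddChar A K) : AddChar A[G] K :=
  ψ.compAddMonoidHom
    ((Finsupp.applyAddHom (0 : G)).comp AddMonoidAlgebra.coeffAddEquiv.toAddMonoidHom)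

theorem constCoeffAddChar_apply [CommMonoid K] (ψ : AddChar A K) (f : A[G]) :
    constCoeffAddChar G ψ f = ψ (f.coeff 0) :=
  rfl

theorem isPrimitive_constCoeffAddChar [CommMonoid K] {ψ : AddChar A K} (hψ : ψ.IsPrimitive) :
    (constCoeffAddChar G ψ).IsPrimitive := by
  intro f hf hone
  refine hf (AddMonoidAlgebra.ext (Finsupp.ext fun g ↦ ?_))
  by_contra hfg
  refine hψ hfg (DFunLike.ext _ _ fun a ↦ ?_)
  have h := DFunLike.congr_fun hone (AddMonoidAlgebra.single (-g) a)
  simpa [constCoeffAddChar_apply] using h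

theorem stmt8_general [Finite A] [Finite G] [CommRing K] [IsDomain K] [CharZero K]
    {ψ : AddChar A K} (hψ : ψ.IsPrimitive) (σ : A[G] ≃+* A[G]) (s : Set A[G]) :
    Nat.card {r : A[G] | ∀ f ∈ s, σ f * r = 0} = Nat.card (A[G] ⧸ Ideal.span s) :=
  have : Finite A[G] := Module.finite_of_finite A
  card_setOf_map_mul_eq_zero (isPrimitive_constCoeffAddChar hψ) σ s

end GroupAlgebra

/-- `bar` bundled as a ring automorphism, so that it acts on ideals and their quotients. -/
noncomputable def barEquiv (N Lx Ly : ℕ) : RL N Lx Ly ≃+* RL N Lx Ly :=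
  AddMonoidAlgebra.mapDomainRingEquiv (ZMod N) (AddEquiv.neg (ZMod Lx × ZMod Ly))

theorem barEquiv_apply (N Lx Ly : ℕ) (f : RL N Lx Ly) : barEquiv N Lx Ly f = bar N Lx Ly f :=
  rfl

theorem stmt8 (N Lx Ly : ℕ) (hN : 0 < N) (hLx : 0 < Lx) (hLy : 0 < Ly)
    (f g : RL N Lx Ly) :
    Nat.card {r : RL N Lx Ly | bar N Lx Ly f * r = 0 ∧ bar N Lx Ly g * r = 0} =
      Nat.card (RL N Lx Ly ⧸ Ideal.span {f, g}) := by
  have := NeZero.of_pos hN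
  have := NeZero.of_pos hLx
  have := NeZero.of_pos hLy
  simpa [barEquiv_apply] using
    stmt8_general (ZMod.isPrimitive_stdAddChar N) (barEquiv N Lx Ly) {f, g}
end

section
/- Let N be a positive integer and a an integer. Then there is a ring isomorphism R_N ⧸ Ideal.span {X − a, Y − a} ≅ ZMod N_a, where N_a is the largest divisor of N coprime to a. (This identifies the electric anyon group of the Watanabe–Cheng–Fuji model, so its anyon fusion group is ZMod N_a × ZMod N_a.) -/
/-- The monomial `X`. -/
noncomputable def Xv (N : ℕ) : RR N := AddMonoidAlgebra.single ((1 : ℤ), (0 : ℤ)) 1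

/-- The monomial `Y`. -/
noncomputable def Yv (N : ℕ) : RR N := AddMonoidAlgebra.single ((0 : ℤ), (1 : ℤ)) 1

/-
Killing `X - a` and `Y - b` forces `a` and `b` to become the units `X` and `Y` and imposes nothing
else, so over any commutative ring `R` the quotient of `R[X^{±1}, Y^{±1}]` is the localization of
`R` away from `a * b`. For `R = ZMod N` the maximality of `N_c`, where `c = a * b`, makes the
cofactor `N / N_c` divide a power of `c`; hence inverting `c` kills `N_c`, and since `c` is already
invertible modulo `N_c`, it kills nothing more: the localization is `ZMod N_c`.
-/

open AddMonoidAlgebra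

theorem addMonoidHom_int_prod_ext {A : Type*} [AddCommMonoid A] {f g : ℤ × ℤ →+ A}
    (h₁ : f (1, 0) = g (1, 0)) (h₂ : f (0, 1) = g (0, 1)) : f = g := by
  have hinl : f.comp (.inl ℤ ℤ) = g.comp (.inl ℤ ℤ) := AddMonoidHom.ext_int h₁
  have hinr : f.comp (.inr ℤ ℤ) = g.comp (.inr ℤ ℤ) := AddMonoidHom.ext_int h₂
  rw [← f.coprod_unique, hinl, hinr, g.coprod_unique]

namespace LaurentQuotient

section Evaluation

variable {R S : Type*} [CommSemiring R] [CommSemiring S] [Algebra R S]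

theorem algHom_ext {f g : R[ℤ × ℤ] →ₐ[R] S}
    (hX : f (single (1, 0) 1) = g (single (1, 0) 1))
    (hY : f (single (0, 1) 1) = g (single (0, 1) 1)) : f = g := by
  refine AddMonoidAlgebra.algHom_ext' ?_ (Subsingleton.elim _ _)
  exact MonoidHom.toAdditiveRight.injective (addMonoidHom_int_prod_ext hX hY)

/-- The evaluation homomorphism `R[X^{±1}, Y^{±1}] → S` sending `X` to `u` and `Y` to `v`. -/
noncomputable def evalUnits (u v : Sˣ) : R[ℤ × ℤ] →ₐ[R] S :=
  AddMonoidAlgebra.lift R S (ℤ × ℤ) <| (Units.coeHom S).comp <|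
    ((zpowersHom Sˣ u).coprod (zpowersHom Sˣ v)).comp (MulEquiv.prodMultiplicative ℤ ℤ).toMonoidHom

@[simp]
theorem evalUnits_X (u v : Sˣ) : evalUnits u v (single (1, 0) 1 : R[ℤ × ℤ]) = u := by
  simp [evalUnits, MulEquiv.prodMultiplicative]

@[simp]
theorem evalUnits_Y (u v : Sˣ) : evalUnits u v (single (0, 1) 1 : R[ℤ × ℤ]) = v := by
  simp [evalUnits, MulEquiv.prodMultiplicative]

theorem isUnit_single {G : Type*} [AddGroup G] (x : G) : IsUnit (single x 1 : R[G]) :=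
  (Group.isUnit (Multiplicative.ofAdd x)).map (AddMonoidAlgebra.of R G)

end Evaluation

section PointIdeal

variable {R : Type*} [CommRing R]

/-- The ideal `(X - a, Y - b)` of `R[X^{±1}, Y^{±1}]`, where `X` and `Y` are the monomials
with exponent vectors `(1, 0)` and `(0, 1)`. -/
noncomputable def pointIdeal (a b : R) : Ideal R[ℤ × ℤ] :=
  Ideal.span {single (1, 0) 1 - algebraMap R R[ℤ × ℤ] a,
    single (0, 1) 1 - algebraMap R R[ℤ × ℤ] b}

theorem pointIdeal_le_ker {S : Type*} [CommRing S] [Algebra R S] {a b : R}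
    {f : R[ℤ × ℤ] →ₐ[R] S} (hX : f (single (1, 0) 1) = algebraMap R S a)
    (hY : f (single (0, 1) 1) = algebraMap R S b) : pointIdeal a b ≤ RingHom.ker f := by
  rw [pointIdeal, Ideal.span_le]
  rintro _ (rfl | rfl) <;> simp [-coe_algebraMap, RingHom.mem_ker, hX, hY]

theorem mk_X (a b : R) : Ideal.Quotient.mk (pointIdeal a b) (single (1, 0) 1) =
    algebraMap R (R[ℤ × ℤ] ⧸ pointIdeal a b) a :=
  Ideal.Quotient.eq.mpr (Ideal.subset_span (Set.mem_insert _ _))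

theorem mk_Y (a b : R) : Ideal.Quotient.mk (pointIdeal a b) (single (0, 1) 1) =
    algebraMap R (R[ℤ × ℤ] ⧸ pointIdeal a b) b :=
  Ideal.Quotient.eq.mpr (Ideal.subset_span (Set.mem_insert_of_mem _ rfl))

theorem isUnit_algebraMap_mul (a b : R) :
    IsUnit (algebraMap R (R[ℤ × ℤ] ⧸ pointIdeal a b) (a * b)) := by
  rw [map_mul, ← mk_X, ← mk_Y]
  exact ((isUnit_single _).map _).mul ((isUnit_single _).map _)

theorem nonempty_quotient_algEquiv (a b : R) (S : Type*) [CommRing S] [Algebra R S]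
    [IsLocalization.Away (a * b) S] : Nonempty ((R[ℤ × ℤ] ⧸ pointIdeal a b) ≃ₐ[R] S) := by
  obtain ⟨⟨u, hu⟩, v, hv⟩ : IsUnit (algebraMap R S a) ∧ IsUnit (algebraMap R S b) := by
    rw [← IsUnit.mul_iff, ← map_mul]
    exact IsLocalization.Away.algebraMap_isUnit (a * b)
  let toS : (R[ℤ × ℤ] ⧸ pointIdeal a b) →ₐ[R] S := Ideal.Quotient.liftₐ _ (evalUnits u v)
    (pointIdeal_le_ker (by simp [hu]) (by simp [hv]))
  let ofS : S →ₐ[R] R[ℤ × ℤ] ⧸ pointIdeal a b :=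
    { IsLocalization.Away.lift (S := S) (a * b) (isUnit_algebraMap_mul a b) with
      commutes' := IsLocalization.Away.lift_eq (a * b) _ }
  refine ⟨AlgEquiv.ofAlgHom toS ofS ?_ ?_⟩
  · exact IsLocalization.algHom_ext (Submonoid.powers (a * b)) (by ext)
  · refine Ideal.Quotient.algHom_ext _ (algHom_ext ?_ ?_)
    · simp [toS, mk_X]
    · simp [toS, mk_Y]

end PointIdeal

end LaurentQuotient

theorem isLocalizationAway_of_surjective {R S : Type*} [CommRing R] [CommRing S] [Algebra R S]
    {c : R} (hsurj : Function.Surjective (algebraMap R S)) (hc : IsUnit (algebraMap R S c))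
    (hker : ∀ x, algebraMap R S x = 0 → ∃ k : ℕ, c ^ k * x = 0) : IsLocalization.Away c S := by
  refine IsLocalization.Away.mk c hc (fun s => ?_) fun x y hxy => ?_
  · obtain ⟨r, rfl⟩ := hsurj s
    exact ⟨0, r, by simp⟩
  · obtain ⟨k, hk⟩ := hker (x - y) (by rw [map_sub, hxy, sub_self])
    exact ⟨k, by rwa [mul_sub, sub_eq_zero] at hk⟩

theorem isLocalizationAway_zmod {N d : ℕ} [Algebra (ZMod N) (ZMod d)] {c : ℤ}
    (hcop : IsCoprime (d : ℤ) c) {k : ℕ} (hdvd : (N : ℤ) ∣ c ^ k * d) :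
    IsLocalization.Away (c : ZMod N) (ZMod d) := by
  refine isLocalizationAway_of_surjective (ZMod.ringHom_surjective _) ?_ fun x hx => ⟨k, ?_⟩
  · simpa [isCoprime_zero_left] using hcop.map (Int.castRingHom (ZMod d))
  · obtain ⟨n, rfl⟩ := ZMod.intCast_surjective x
    rw [map_intCast, ZMod.intCast_zmod_eq_zero_iff_dvd] at hx
    have h : (N : ℤ) ∣ c ^ k * n := hdvd.trans (mul_dvd_mul_left _ hx)
    exact_mod_cast (ZMod.intCast_zmod_eq_zero_iff_dvd _ _).mpr h

theorem exists_natCast_dvd_pow_of_prime_dvd {m : ℕ} (hm : m ≠ 0) {c : ℤ}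
    (h : ∀ p : ℕ, p.Prime → p ∣ m → (p : ℤ) ∣ c) : ∃ k : ℕ, (m : ℤ) ∣ c ^ k := by
  have hrad : UniqueFactorizationMonoid.radical m ∣ c.natAbs := by
    rw [Nat.radical_eq_prod_primeFactors]
    refine Finset.prod_primes_dvd _ (fun p hp => (Nat.prime_of_mem_primeFactors hp).prime)
      fun p hp => Int.natCast_dvd.mp ?_
    exact h p (Nat.prime_of_mem_primeFactors hp) (Nat.dvd_of_mem_primeFactors hp)
  obtain ⟨k, hk⟩ := (UniqueFactorizationMonoid.exists_dvd_pow_iff_radical_dvd hm).mpr hrad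
  exact ⟨k, by rwa [Int.natCast_dvd, Int.natAbs_pow]⟩

theorem prime_dvd_of_dvd_cofactor {c : ℤ} {d m : ℕ} (hd : 0 < d) (hcop : IsCoprime (d : ℤ) c)
    (hmax : ∀ e : ℕ, e ∣ d * m → IsCoprime (e : ℤ) c → e ≤ d)
    {p : ℕ} (hp : p.Prime) (hpm : p ∣ m) : (p : ℤ) ∣ c := by
  by_contra hpc
  have hcop_mul : IsCoprime ((d * p : ℕ) : ℤ) c := by
    rw [Nat.cast_mul]
    exact hcop.mul_left ((Nat.prime_iff_prime_int.mp hp).coprime_iff_not_dvd.mpr hpc)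
  exact (lt_mul_of_one_lt_right hd hp.one_lt).not_ge
    (hmax (d * p) (mul_dvd_mul_left d hpm) hcop_mul)

theorem stmt9_general (N : ℕ) (hN : 0 < N) (a b : ℤ) (Nab : ℕ)
    (hNab_dvd : Nab ∣ N) (hNab_cop : IsCoprime (Nab : ℤ) (a * b))
    (hNab_max : ∀ d : ℕ, d ∣ N → IsCoprime (d : ℤ) (a * b) → d ≤ Nab) :
    Nonempty ((RR N ⧸ Ideal.span {Xv N - (a : RR N), Yv N - (b : RR N)}) ≃+* ZMod Nab) := by
  obtain ⟨m, rfl⟩ := hNab_dvd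
  obtain ⟨k, hk⟩ : ∃ k : ℕ, (m : ℤ) ∣ (a * b) ^ k :=
    exists_natCast_dvd_pow_of_prime_dvd (Nat.pos_of_mul_pos_left hN).ne' fun p hp hpm =>
      prime_dvd_of_dvd_cofactor (Nat.pos_of_mul_pos_right hN) hNab_cop hNab_max hp hpm
  let := ZMod.algebra' (ZMod Nab) Nab (dvd_mul_right Nab m)
  have : IsLocalization.Away ((a : ZMod (Nab * m)) * b) (ZMod Nab) := by
    rw [← Int.cast_mul]
    refine isLocalizationAway_zmod hNab_cop (k := k) ?_
    rw [Nat.cast_mul, mul_comm]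
    exact mul_dvd_mul_right hk _
  obtain ⟨e⟩ := LaurentQuotient.nonempty_quotient_algEquiv (a : ZMod (Nab * m)) b (ZMod Nab)
  rw [LaurentQuotient.pointIdeal, map_intCast, map_intCast] at e
  exact ⟨e.toRingEquiv⟩

/-- The electric anyon group of the Watanabe–Cheng–Fuji model `BB_N(X - a, Y - a)` is
`ZMod N_a`, where `N_a` is the largest divisor of `N` coprime to `a`. -/
theorem stmt9 (N : ℕ) (hN : 0 < N) (a : ℤ) (Na : ℕ)
    (hNa_dvd : Na ∣ N) (hNa_cop : IsCoprime (Na : ℤ) a)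
    (hNa_max : ∀ d : ℕ, d ∣ N → IsCoprime ((d : ℤ)) a → d ≤ Na) :
    Nonempty ((RR N ⧸ Ideal.span {Xv N - (a : RR N), Yv N - (a : RR N)}) ≃+* ZMod Na) :=
  stmt9_general N hN a a Na hNa_dvd (hNa_cop.mul_right hNa_cop) fun d hd hcop =>
    hNa_max d hd hcop.of_mul_right_left
end

section
/- Let N be a positive integer, a an integer, N_a the largest divisor of N coprime to a, and α a natural number. Then X^α − 1 lies in the ideal Ideal.span {X − a, Y − a} of R_N if and only if N_a divides a^α − 1 in ℤ. (Consequently, the anyon periodicity of the Watanabe–Cheng–Fuji model along the x-direction is the multiplicative order of a modulo N_a.) -/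
/-!
In `R[X^{±1}, Y^{±1}] / (X - r, Y - s)` the elements `r` and `s` become invertible, being the images
of `X` and `Y`, so this quotient is the localization `R[1/(rs)]`, and `X^α - 1` lies in the ideal
iff `r^α - 1` is killed by a power of `rs`. For `R = ZMod N` the powers of an integer `c` eventually
absorb exactly the part of `N` built from primes dividing `c`, and what remains is divisibility by
the largest divisor of `N` coprime to `c`.
-/

/-- The ring `R[X^{±1}, Y^{±1}]` of Laurent polynomials in two variables, which is `RR N` for
`R = ZMod N`; the element `(i, j)` of `ℤ × ℤ` is the exponent vector of `X ^ i * Y ^ j`. -/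
abbrev BivariateLaurent (R : Type*) [CommRing R] : Type _ := AddMonoidAlgebra R (ℤ × ℤ)

namespace BivariateLaurent

variable {R A L : Type*} [CommRing R]

/-- The first variable of `R[X^{±1}, Y^{±1}]`, which is `Xv N` for `R = ZMod N`. -/
noncomputable def X (R : Type*) [CommRing R] : BivariateLaurent R :=
  AddMonoidAlgebra.single (1, 0) 1

/-- The second variable of `R[X^{±1}, Y^{±1}]`, which is `Yv N` for `R = ZMod N`. -/
noncomputable def Y (R : Type*) [CommRing R] : BivariateLaurent R :=
  AddMonoidAlgebra.single (0, 1) 1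

theorem isUnit_X : IsUnit (X R) :=
  (Group.isUnit (Multiplicative.ofAdd ((1, 0) : ℤ × ℤ))).map (AddMonoidAlgebra.of R (ℤ × ℤ))

theorem isUnit_Y : IsUnit (Y R) :=
  (Group.isUnit (Multiplicative.ofAdd ((0, 1) : ℤ × ℤ))).map (AddMonoidAlgebra.of R (ℤ × ℤ))

theorem algHom_ext_of_X_Y [Semiring A] [Algebra R A] {f g : BivariateLaurent R →ₐ[R] A}
    (hX : f (X R) = g (X R)) (hY : f (Y R) = g (Y R)) : f = g := by
  let monomialX : Multiplicative ℤ →* BivariateLaurent R :=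
    (AddMonoidAlgebra.of R (ℤ × ℤ)).comp (AddMonoidHom.toMultiplicative (AddMonoidHom.inl ℤ ℤ))
  let monomialY : Multiplicative ℤ →* BivariateLaurent R :=
    (AddMonoidAlgebra.of R (ℤ × ℤ)).comp (AddMonoidHom.toMultiplicative (AddMonoidHom.inr ℤ ℤ))
  have hfgX : (f : BivariateLaurent R →* A).comp monomialX =
      (g : BivariateLaurent R →* A).comp monomialX := MonoidHom.ext_mint hX
  have hfgY : (f : BivariateLaurent R →* A).comp monomialY =
      (g : BivariateLaurent R →* A).comp monomialY := MonoidHom.ext_mint hY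
  refine AddMonoidAlgebra.algHom_ext (fun ⟨i, j⟩ => ?_) (Subsingleton.elim _ _)
  have hsplit : AddMonoidAlgebra.single (i, j) (1 : R) =
      monomialX (.ofAdd i) * monomialY (.ofAdd j) := by
    simp [monomialX, monomialY, AddMonoidAlgebra.single_mul_single]
  rw [hsplit, map_mul, map_mul]
  exact congrArg₂ (· * ·) (DFunLike.congr_fun hfgX _) (DFunLike.congr_fun hfgY _)

/-- Evaluation of Laurent polynomials at `X = u` and `Y = v`, for units `u` and `v` of an
`R`-algebra. -/
noncomputable def evalUnits (R : Type*) [CommRing R] [CommRing A] [Algebra R A] (u v : Aˣ) :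
    BivariateLaurent R →ₐ[R] A :=
  AddMonoidAlgebra.lift R A (ℤ × ℤ) <| (Units.coeHom A).comp <|
    AddMonoidHom.toMultiplicativeLeft <|
      (zmultiplesHom (Additive Aˣ) (.ofMul u)).coprod (zmultiplesHom (Additive Aˣ) (.ofMul v))

@[simp]
theorem evalUnits_X [CommRing A] [Algebra R A] (u v : Aˣ) : evalUnits R u v (X R) = u := by
  simp [evalUnits, X]

@[simp]
theorem evalUnits_Y [CommRing A] [Algebra R A] (u v : Aˣ) : evalUnits R u v (Y R) = v := by
  simp [evalUnits, Y]

theorem span_le_ker_evalUnits [CommRing A] [Algebra R A] {r s : R} {u v : Aˣ}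
    (hu : (u : A) = algebraMap R A r) (hv : (v : A) = algebraMap R A s) :
    Ideal.span {X R - algebraMap R _ r, Y R - algebraMap R _ s} ≤
      RingHom.ker (evalUnits R u v) := by
  rw [Ideal.span_le]
  rintro p (rfl | rfl) <;> rw [SetLike.mem_coe, RingHom.mem_ker, map_sub, AlgHom.commutes]
  · rw [evalUnits_X, hu, sub_self]
  · rw [evalUnits_Y, hv, sub_self]

theorem ker_evalUnits_eq_span [CommRing L] [Algebra R L] (r s : R)
    [IsLocalization.Away (r * s) L] {u v : Lˣ}
    (hu : (u : L) = algebraMap R L r) (hv : (v : L) = algebraMap R L s) :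
    RingHom.ker (evalUnits R u v) =
      Ideal.span {X R - algebraMap R _ r, Y R - algebraMap R _ s} := by
  refine le_antisymm (fun p hp => ?_) (span_le_ker_evalUnits hu hv)
  set I : Ideal (BivariateLaurent R) :=
    Ideal.span {X R - algebraMap R _ r, Y R - algebraMap R _ s}
  let π := Ideal.Quotient.mkₐ R I
  have hπX : π (X R) = algebraMap R _ r :=
    Ideal.Quotient.eq.2 (Ideal.subset_span (Set.mem_insert _ _))
  have hπY : π (Y R) = algebraMap R _ s :=
    Ideal.Quotient.eq.2 (Ideal.subset_span (Set.mem_insert_of_mem _ rfl))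
  have hunit : IsUnit (Algebra.ofId R (BivariateLaurent R ⧸ I) (r * s)) := by
    rw [map_mul, Algebra.ofId_apply, Algebra.ofId_apply, ← hπX, ← hπY]
    exact (isUnit_X.map π).mul (isUnit_Y.map π)
  let φ : L →ₐ[R] BivariateLaurent R ⧸ I := IsLocalization.Away.liftAlgHom (r * s) hunit
  have hφ : φ.comp (evalUnits R u v) = π :=
    algHom_ext_of_X_Y (by simp [hu, hπX]) (by simp [hv, hπY])
  have hπp : π p = 0 := by
    rw [← hφ, AlgHom.comp_apply, RingHom.mem_ker.1 hp, map_zero]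
  exact Ideal.Quotient.eq_zero_iff_mem.1 hπp

theorem X_pow_sub_one_mem_span_iff (r s : R) (α : ℕ) :
    X R ^ α - 1 ∈ Ideal.span {X R - algebraMap R _ r, Y R - algebraMap R _ s} ↔
      ∃ k : ℕ, (r * s) ^ k * (r ^ α - 1) = 0 := by
  let L := Localization.Away (r * s)
  obtain ⟨⟨u, hu⟩, ⟨v, hv⟩⟩ : IsUnit (algebraMap R L r) ∧ IsUnit (algebraMap R L s) := by
    rw [← IsUnit.mul_iff, ← map_mul]
    exact IsLocalization.Away.algebraMap_isUnit (r * s)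
  have heval : evalUnits R u v (X R ^ α - 1) = algebraMap R L (r ^ α - 1) := by
    simp only [map_sub, map_pow, map_one, evalUnits_X, hu]
  rw [← ker_evalUnits_eq_span r s hu hv, RingHom.mem_ker, heval,
    IsLocalization.map_eq_zero_iff (Submonoid.powers (r * s))]
  simp [Submonoid.mem_powers_iff]

end BivariateLaurent

theorem dvd_pow_self_of_forall_prime_dvd {m b : ℕ} (hm : m ≠ 0)
    (h : ∀ p : ℕ, p.Prime → p ∣ m → p ∣ b) : m ∣ b ^ m := by
  have hprod : ∏ p ∈ m.primeFactors, p ∣ b :=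
    Finset.prod_primes_dvd b (fun p hp => (Nat.prime_of_mem_primeFactors hp).prime)
      fun p hp => h p (Nat.prime_of_mem_primeFactors hp) (Nat.dvd_of_mem_primeFactors hp)
  exact (Nat.dvd_prod_primeFactors_pow_self hm).trans (pow_dvd_pow_of_dvd hprod m)

section LargestCoprimeDivisor

variable {N d : ℕ} {c : ℤ}

theorem prime_dvd_of_isGreatest_coprime_dvd (hN : N ≠ 0)
    (hd : IsGreatest {e : ℕ | e ∣ N ∧ IsCoprime (e : ℤ) c} d) {p : ℕ} (hp : p.Prime)
    (hdp : d * p ∣ N) : (p : ℤ) ∣ c := by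
  by_contra hpc
  have hcop : IsCoprime ((d * p : ℕ) : ℤ) c := by
    rw [Nat.cast_mul]
    exact hd.1.2.mul_left ((Nat.prime_iff_prime_int.1 hp).coprime_iff_not_dvd.2 hpc)
  have hlt : d < d * p :=
    lt_mul_of_one_lt_right (Nat.pos_of_ne_zero (ne_zero_of_dvd_ne_zero hN hd.1.1)) hp.one_lt
  exact hlt.not_ge (hd.2 ⟨hdp, hcop⟩)

theorem exists_dvd_pow_mul_iff_of_isGreatest_coprime_dvd (hN : N ≠ 0)
    (hd : IsGreatest {e : ℕ | e ∣ N ∧ IsCoprime (e : ℤ) c} d) (n : ℤ) :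
    (∃ k : ℕ, (N : ℤ) ∣ c ^ k * n) ↔ (d : ℤ) ∣ n := by
  constructor
  · rintro ⟨k, hk⟩
    exact hd.1.2.pow_right.dvd_of_dvd_mul_left ((Int.natCast_dvd_natCast.2 hd.1.1).trans hk)
  · intro hdn
    obtain ⟨m, hm⟩ := hd.1.1
    have hmc : m ∣ c.natAbs ^ m :=
      dvd_pow_self_of_forall_prime_dvd (right_ne_zero_of_mul (hm ▸ hN)) fun p hp hpm =>
        Int.natCast_dvd.1 <|
          prime_dvd_of_isGreatest_coprime_dvd hN hd hp (hm ▸ mul_dvd_mul_left d hpm)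
    refine ⟨m, ?_⟩
    rw [hm, Nat.cast_mul, mul_comm]
    exact mul_dvd_mul (Int.natCast_dvd.2 (Int.natAbs_pow c m ▸ hmc)) hdn

end LargestCoprimeDivisor

theorem stmt10_general {N : ℕ} (hN : N ≠ 0) (a b : ℤ) {d : ℕ}
    (hd : IsGreatest {e : ℕ | e ∣ N ∧ IsCoprime (e : ℤ) (a * b)} d) (α : ℕ) :
    Xv N ^ α - 1 ∈ Ideal.span {Xv N - (a : RR N), Yv N - (b : RR N)} ↔ (d : ℤ) ∣ a ^ α - 1 := by
  have hmem := BivariateLaurent.X_pow_sub_one_mem_span_iff (a : ZMod N) (b : ZMod N) α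
  rw [map_intCast, map_intCast] at hmem
  refine hmem.trans <| Iff.trans ?_ (exists_dvd_pow_mul_iff_of_isGreatest_coprime_dvd hN hd _)
  exact exists_congr fun k => by exact_mod_cast ZMod.intCast_zmod_eq_zero_iff_dvd _ N

/-- Mobility condition for the Watanabe–Cheng–Fuji model `BB_N(X - a, Y - a)`:
`X^α - 1` lies in the ideal `(X - a, Y - a)` iff `N_a` divides `a^α - 1`. -/
theorem stmt10 (N : ℕ) (hN : 0 < N) (a : ℤ) (Na : ℕ)
    (hNa_dvd : Na ∣ N) (hNa_cop : IsCoprime (Na : ℤ) a)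
    (hNa_max : ∀ d : ℕ, d ∣ N → IsCoprime ((d : ℤ)) a → d ≤ Na)
    (α : ℕ) :
    (Xv N ^ α - 1 ∈ Ideal.span {Xv N - (a : RR N), Yv N - (a : RR N)}) ↔
      (Na : ℤ) ∣ a ^ α - 1 :=
  stmt10_general hN.ne' a a ⟨⟨hNa_dvd, hNa_cop.mul_right hNa_cop⟩,
    fun e he => hNa_max e he.1 he.2.of_mul_right_left⟩ α
end

section
/- Let N, L_x, L_y be positive integers, a an integer, and N_a the largest divisor of N coprime to a. Then the cardinality of the quotient ring R_N ⧸ Ideal.span {X − a, Y − a, X^{L_x} − 1, Y^{L_y} − 1} equals the greatest common divisor gcd(N_a, a^{L_x} − 1, a^{L_y} − 1) (as a natural number, taking gcds of integers). Consequently, the ground state degeneracy of the Watanabe–Cheng–Fuji model on an L_x × L_y torus is gcd(N_a, a^{L_x} − 1, a^{L_y} − 1)². -/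
/-!
Over any commutative ring `R`, imposing `X = x` and `Y = y` turns the relations `X ^ m = 1` and
`Y ^ n = 1` into `x ^ m = 1` and `y ^ n = 1`. For `m, n ≠ 0` these already make `x` and `y` units,
so the quotient of `R[X^{±1}, Y^{±1}]` by `(X - x, Y - y, X ^ m - 1, Y ^ n - 1)` is
`R ⧸ (x ^ m - 1, y ^ n - 1)`. For `R = ZMod N` and integers `x`, `y` this has
`gcd(N, x ^ m - 1, y ^ n - 1)` elements. A divisor of `a ^ m - 1` is coprime to `a`, so for
`x = y = a` the entry `N` of this gcd may be replaced by its largest divisor coprime to `a`.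
-/

theorem addMonoidHom_int_prod_int_ext {A : Type*} [AddMonoid A] {f g : ℤ × ℤ →+ A}
    (h₁ : f (1, 0) = g (1, 0)) (h₂ : f (0, 1) = g (0, 1)) : f = g := by
  have hl : f.comp (.inl ℤ ℤ) = g.comp (.inl ℤ ℤ) := AddMonoidHom.ext_int h₁
  have hr : f.comp (.inr ℤ ℤ) = g.comp (.inr ℤ ℤ) := AddMonoidHom.ext_int h₂
  ext ⟨m, n⟩
  rw [← Prod.fst_add_snd (m, n), map_add, map_add]
  exact congrArg₂ (· + ·) (DFunLike.congr_fun hl m) (DFunLike.congr_fun hr n)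

section LaurentPolynomial

/-- The variable `X` of the Laurent polynomial ring `R[X^{±1}, Y^{±1}]`, encoded as in `Xv` but over
an arbitrary coefficient ring. -/
noncomputable def laurentX (R : Type*) [CommRing R] : AddMonoidAlgebra R (ℤ × ℤ) :=
  AddMonoidAlgebra.single (1, 0) 1

/-- The variable `Y` of the Laurent polynomial ring `R[X^{±1}, Y^{±1}]`, encoded as in `Yv` but over
an arbitrary coefficient ring. -/
noncomputable def laurentY (R : Type*) [CommRing R] : AddMonoidAlgebra R (ℤ × ℤ) :=
  AddMonoidAlgebra.single (0, 1) 1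

variable {R S : Type*} [CommRing R]

theorem laurent_algHom_ext [Semiring S] [Algebra R S] {f g : AddMonoidAlgebra R (ℤ × ℤ) →ₐ[R] S}
    (hX : f (laurentX R) = g (laurentX R)) (hY : f (laurentY R) = g (laurentY R)) : f = g :=
  (AddMonoidAlgebra.lift R S (ℤ × ℤ)).symm.injective <|
    AddMonoidHom.toMultiplicativeLeft.symm.injective <| addMonoidHom_int_prod_int_ext hX hY

variable [CommRing S] [Algebra R S]

/-- Evaluation of Laurent polynomials at `X = u` and `Y = v`, which must be units because `X` and
`Y` are invertible. -/
noncomputable def laurentEval (R : Type*) {S : Type*} [CommRing R] [CommRing S] [Algebra R S]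
    (u v : Sˣ) : AddMonoidAlgebra R (ℤ × ℤ) →ₐ[R] S :=
  AddMonoidAlgebra.lift R S (ℤ × ℤ) <| (Units.coeHom S).comp <|
    AddMonoidHom.toMultiplicativeLeft <|
      (zmultiplesHom (Additive Sˣ) (.ofMul u)).coprod (zmultiplesHom (Additive Sˣ) (.ofMul v))

@[simp]
theorem laurentEval_laurentX (u v : Sˣ) : laurentEval R u v (laurentX R) = u := by
  simp [laurentEval, laurentX]

@[simp]
theorem laurentEval_laurentY (u v : Sˣ) : laurentEval R u v (laurentY R) = v := by
  simp [laurentEval, laurentY]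

/-- The ideal `(X - x, Y - y, X ^ m - 1, Y ^ n - 1)` of `R[X^{±1}, Y^{±1}]`, whose quotient is the
ring of the model `(X - x, Y - y)` on an `m × n` torus. -/
noncomputable def torusIdeal (x y : R) (m n : ℕ) : Ideal (AddMonoidAlgebra R (ℤ × ℤ)) :=
  Ideal.span {laurentX R - algebraMap R _ x, laurentY R - algebraMap R _ y,
    laurentX R ^ m - 1, laurentY R ^ n - 1}

theorem torusIdeal_le_ker_laurentEval {x y : R} {m n : ℕ} {u v : Sˣ}
    (hu : u = algebraMap R S x) (hv : v = algebraMap R S y)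
    (hum : (u : S) ^ m = 1) (hvn : (v : S) ^ n = 1) :
    torusIdeal x y m n ≤ RingHom.ker (laurentEval R u v) := by
  rw [torusIdeal, Ideal.span_le]
  rintro _ (rfl | rfl | rfl | rfl) <;> rw [SetLike.mem_coe, RingHom.mem_ker, map_sub]
  · rw [laurentEval_laurentX, AlgHom.commutes, hu, sub_self]
  · rw [laurentEval_laurentY, AlgHom.commutes, hv, sub_self]
  · rw [map_pow, laurentEval_laurentX, hum, map_one, sub_self]
  · rw [map_pow, laurentEval_laurentY, hvn, map_one, sub_self]

variable (x y : R) (m n : ℕ)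

theorem mk_torusIdeal_laurentX :
    Ideal.Quotient.mk (torusIdeal x y m n) (laurentX R) = algebraMap R _ x :=
  Ideal.Quotient.eq.2 (Ideal.subset_span (by simp))

theorem mk_torusIdeal_laurentY :
    Ideal.Quotient.mk (torusIdeal x y m n) (laurentY R) = algebraMap R _ y :=
  Ideal.Quotient.eq.2 (Ideal.subset_span (by simp))

theorem span_le_ker_algebraMap_quotient_torusIdeal :
    Ideal.span {x ^ m - 1, y ^ n - 1} ≤
      RingHom.ker (algebraMap R (AddMonoidAlgebra R (ℤ × ℤ) ⧸ torusIdeal x y m n)) := by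
  rw [Ideal.span_le]
  rintro _ (rfl | rfl) <;>
    rw [SetLike.mem_coe, RingHom.mem_ker, map_sub, map_pow, map_one, sub_eq_zero]
  · rw [← mk_torusIdeal_laurentX, ← map_pow]
    exact Ideal.Quotient.eq.2 (Ideal.subset_span (by simp))
  · rw [← mk_torusIdeal_laurentY, ← map_pow]
    exact Ideal.Quotient.eq.2 (Ideal.subset_span (by simp))

theorem nonempty_quotient_torusIdeal_algEquiv (hm : m ≠ 0) (hn : n ≠ 0) :
    Nonempty ((AddMonoidAlgebra R (ℤ × ℤ) ⧸ torusIdeal x y m n) ≃ₐ[R]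
      R ⧸ Ideal.span {x ^ m - 1, y ^ n - 1}) := by
  set K := Ideal.span {x ^ m - 1, y ^ n - 1}
  have hx : algebraMap R (R ⧸ K) x ^ m = 1 := Ideal.Quotient.eq.2 (Ideal.subset_span (by simp))
  have hy : algebraMap R (R ⧸ K) y ^ n = 1 := Ideal.Quotient.eq.2 (Ideal.subset_span (by simp))
  let u := Units.ofPowEqOne _ m hx hm
  let v := Units.ofPowEqOne _ n hy hn
  let f := Ideal.Quotient.liftₐ (torusIdeal x y m n) (laurentEval R u v)
    (torusIdeal_le_ker_laurentEval rfl rfl hx hy)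
  let g := Ideal.Quotient.liftₐ K (Algebra.ofId R _)
    (span_le_ker_algebraMap_quotient_torusIdeal x y m n)
  have hfX : f (Ideal.Quotient.mk _ (laurentX R)) = algebraMap R _ x := laurentEval_laurentX u v
  have hfY : f (Ideal.Quotient.mk _ (laurentY R)) = algebraMap R _ y := laurentEval_laurentY u v
  have hfg : f.comp g = AlgHom.id R _ := Ideal.Quotient.algHom_ext R (Subsingleton.elim _ _)
  have hgf : g.comp f = AlgHom.id R _ := by
    refine Ideal.Quotient.algHom_ext R (laurent_algHom_ext ?_ ?_)
    · exact (congrArg g hfX).trans <|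
        (g.commutes x).trans (mk_torusIdeal_laurentX x y m n).symm
    · exact (congrArg g hfY).trans <|
        (g.commutes y).trans (mk_torusIdeal_laurentY x y m n).symm
  exact ⟨AlgEquiv.ofAlgHom f g hfg hgf⟩

end LaurentPolynomial

theorem card_zmod_quotient_span_pair (N : ℕ) (k l : ℤ) :
    Nat.card (ZMod N ⧸ Ideal.span {(k : ZMod N), (l : ZMod N)}) = Int.gcd N (Int.gcd k l) := by
  let I := Ideal.span {(k : ZMod N), (l : ZMod N)}
  let f := (Ideal.Quotient.mk I).comp (Int.castRingHom (ZMod N))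
  have hf : Function.Surjective f :=
    Ideal.Quotient.mk_surjective.comp (ZMod.ringHom_surjective (Int.castRingHom (ZMod N)))
  have hI : I = (Ideal.span {k, l}).map (Int.castRingHom (ZMod N)) := by
    simp [I, Ideal.map_span, Set.image_pair]
  have hker : RingHom.ker f = Ideal.span {(Int.gcd N (Int.gcd k l) : ℤ)} := by
    rw [← RingHom.comap_ker, Ideal.mk_ker, hI,
      Ideal.comap_map_of_surjective' _ (ZMod.ringHom_surjective (Int.castRingHom (ZMod N))),
      ZMod.ker_intCastRingHom, sup_comm, Int.coe_gcd, Int.coe_gcd, span_gcd,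
      Ideal.span_insert (N : ℤ), ← span_gcd k l]
  rw [← Nat.card_congr (RingHom.quotientKerEquivOfSurjective hf).toEquiv, hker,
    Nat.card_congr (Int.quotientSpanNatEquivZMod _).toEquiv, Nat.card_zmod]

section CoprimePart

theorem isCoprime_pow_sub_one_self {R : Type*} [CommRing R] (a : R) {n : ℕ} (hn : n ≠ 0) :
    IsCoprime (a ^ n - 1) a :=
  ⟨-1, a ^ (n - 1), by rw [pow_sub_one_mul hn]; ring⟩

variable {N Na : ℕ} {a : ℤ}

theorem dvd_of_isGreatest_coprime_divisor (hN : N ≠ 0)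
    (hNa : IsGreatest {d : ℕ | d ∣ N ∧ IsCoprime (d : ℤ) a} Na) {d : ℕ} (hd : d ∣ N)
    (hda : IsCoprime (d : ℤ) a) : d ∣ Na := by
  obtain ⟨⟨hNaN, hNa_cop⟩, hmax⟩ := hNa
  have hlcm : d.lcm Na ∣ N := Nat.lcm_dvd hd hNaN
  have hlcm_cop : IsCoprime (d.lcm Na : ℤ) a :=
    (hda.mul_left hNa_cop).of_isCoprime_of_dvd_left (by exact_mod_cast Nat.lcm_dvd_mul d Na)
  have hle : d.lcm Na ≤ Na := hmax ⟨hlcm, hlcm_cop⟩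
  have hpos : 0 < d.lcm Na := Nat.pos_of_dvd_of_pos hlcm hN.bot_lt
  rw [← hle.antisymm (Nat.le_of_dvd hpos (Nat.dvd_lcm_right d Na))]
  exact Nat.dvd_lcm_left d Na

theorem gcd_eq_gcd_of_isGreatest_coprime_divisor (hN : N ≠ 0)
    (hNa : IsGreatest {d : ℕ | d ∣ N ∧ IsCoprime (d : ℤ) a} Na) {k : ℤ} (hk : IsCoprime k a) :
    Int.gcd Na k = Int.gcd N k := by
  have hcop : IsCoprime (Int.gcd N k : ℤ) a := hk.of_isCoprime_of_dvd_left (Int.gcd_dvd_right _ _)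
  refine Nat.dvd_antisymm (Int.gcd_dvd_gcd_of_dvd_left _ (by exact_mod_cast hNa.1.1)) ?_
  refine Int.dvd_gcd ?_ (Int.gcd_dvd_right _ _)
  exact_mod_cast dvd_of_isGreatest_coprime_divisor hN hNa
    (by exact_mod_cast Int.gcd_dvd_left (N : ℤ) k) hcop

end CoprimePart

theorem stmt11_general (N : ℕ) {Lx Ly : ℕ} (hLx : Lx ≠ 0) (hLy : Ly ≠ 0) (a b : ℤ) :
    Nat.card (RR N ⧸ Ideal.span
        {Xv N - (a : RR N), Yv N - (b : RR N), Xv N ^ Lx - 1, Yv N ^ Ly - 1}) =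
      Int.gcd N (Int.gcd (a ^ Lx - 1) (b ^ Ly - 1)) := by
  obtain ⟨e⟩ := nonempty_quotient_torusIdeal_algEquiv (a : ZMod N) (b : ZMod N) Lx Ly hLx hLy
  have hI : Ideal.span {Xv N - (a : RR N), Yv N - (b : RR N), Xv N ^ Lx - 1, Yv N ^ Ly - 1} =
      torusIdeal (a : ZMod N) (b : ZMod N) Lx Ly := by
    simp only [torusIdeal, map_intCast]
    rfl
  rw [hI, Nat.card_congr e.toEquiv, ← card_zmod_quotient_span_pair]
  simp only [Int.cast_sub, Int.cast_pow, Int.cast_one]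

/-- Ground state degeneracy of the Watanabe–Cheng–Fuji model on an `L_x × L_y` torus:
the quotient ring has cardinality `gcd(N_a, a^{L_x} - 1, a^{L_y} - 1)`, hence
`GSD = gcd(N_a, a^{L_x} - 1, a^{L_y} - 1)²`. -/
theorem stmt11 (N Lx Ly : ℕ) (hN : 0 < N) (hLx : 0 < Lx) (hLy : 0 < Ly)
    (a : ℤ) (Na : ℕ)
    (hNa_dvd : Na ∣ N) (hNa_cop : IsCoprime (Na : ℤ) a)
    (hNa_max : ∀ d : ℕ, d ∣ N → IsCoprime ((d : ℤ)) a → d ≤ Na) :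
    Nat.card (RR N ⧸ Ideal.span
        {Xv N - (a : RR N), Yv N - (a : RR N), Xv N ^ Lx - 1, Yv N ^ Ly - 1}) =
      Int.gcd (Na : ℤ) (Int.gcd (a ^ Lx - 1) (a ^ Ly - 1)) := by
  have hcop : IsCoprime (Int.gcd (a ^ Lx - 1) (a ^ Ly - 1) : ℤ) a :=
    (isCoprime_pow_sub_one_self a hLx.ne').of_isCoprime_of_dvd_left (Int.gcd_dvd_left _ _)
  rw [stmt11_general N hLx.ne' hLy.ne', gcd_eq_gcd_of_isGreatest_coprime_divisor hN.ne'
    ⟨⟨hNa_dvd, hNa_cop⟩, fun d hd => hNa_max d hd.1 hd.2⟩ hcop]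
end

section
/- Let M be a positive integer and a an integer coprime to M, and let d be the least positive integer such that M divides a^d − 1 (the multiplicative order of a modulo M). Then the least positive integer α such that M divides G_α = ∑_{m=0}^{α−1} a^m is d · (M / gcd(G_d, M)). -/
/-!
Write `G_n = ∑_{i<n} x ^ i`. If `G_n = 0`, then comparing `G_n + x ^ n = x * G_n + 1` gives
`x ^ n = 1`, so `n = d * k` with `d` the order of `x`. The terms of `G_{dk}` are periodic with
period `d`, hence `G_{dk} = k • G_d`, and this vanishes exactly when the additive order of `G_d`
divides `k`. In `ZMod M` that additive order is `M / gcd(G_d, M)`.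
-/

open Finset

section Semiring

variable {R : Type*} [Semiring R] {x : R}

theorem pow_eq_one_of_geom_sum_eq_zero {n : ℕ} (h : ∑ i ∈ range n, x ^ i = 0) : x ^ n = 1 :=
  calc
    x ^ n = ∑ i ∈ range (n + 1), x ^ i := by rw [sum_range_succ, h, zero_add]
    _ = 1 := by rw [geom_sum_succ, h, mul_zero, zero_add]

theorem geom_sum_mul_eq_nsmul_of_pow_eq_one {d : ℕ} (hx : x ^ d = 1) (k : ℕ) :
    ∑ i ∈ range (d * k), x ^ i = k • ∑ i ∈ range d, x ^ i := by
  induction k with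
  | zero => simp
  | succ k ih =>
    simp only [Nat.mul_succ, sum_range_add, pow_add, pow_mul, hx, one_pow, one_mul, ih, succ_nsmul]

theorem geom_sum_eq_zero_iff_orderOf_mul_addOrderOf_dvd {n : ℕ} :
    ∑ i ∈ range n, x ^ i = 0 ↔
      orderOf x * addOrderOf (∑ i ∈ range (orderOf x), x ^ i) ∣ n := by
  constructor
  · intro h
    obtain ⟨k, rfl⟩ := orderOf_dvd_of_pow_eq_one (pow_eq_one_of_geom_sum_eq_zero h)
    rw [geom_sum_mul_eq_nsmul_of_pow_eq_one (pow_orderOf_eq_one x)] at h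
    exact mul_dvd_mul_left _ (addOrderOf_dvd_of_nsmul_eq_zero h)
  · rintro ⟨k, rfl⟩
    rw [mul_assoc, geom_sum_mul_eq_nsmul_of_pow_eq_one (pow_orderOf_eq_one x), mul_nsmul,
      addOrderOf_nsmul_eq_zero, nsmul_zero]

theorem stmt14_general (hx : IsOfFinOrder x)
    (hG : IsOfFinAddOrder (∑ i ∈ range (orderOf x), x ^ i)) :
    IsLeast {n : ℕ | 0 < n ∧ ∑ i ∈ range n, x ^ i = 0}
      (orderOf x * addOrderOf (∑ i ∈ range (orderOf x), x ^ i)) := by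
  simp only [geom_sum_eq_zero_iff_orderOf_mul_addOrderOf_dvd]
  exact ⟨⟨Nat.mul_pos hx.orderOf_pos hG.addOrderOf_pos, dvd_rfl⟩,
    fun _ hn ↦ Nat.le_of_dvd hn.1 hn.2⟩

end Semiring

section ZMod

variable {M : ℕ} {a : ℤ}

theorem addOrderOf_intCast_zmod (hM : M ≠ 0) (a : ℤ) :
    addOrderOf (a : ZMod M) = M / Int.gcd a M := by
  have hnatAbs : addOrderOf (a : ZMod M) = addOrderOf (a.natAbs : ZMod M) := by
    rcases Int.natAbs_eq a with h | h <;> rw [h] <;> simp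
  rw [hnatAbs, ZMod.addOrderOf_coe _ hM, Int.gcd_comm, Int.gcd_def, Int.natAbs_natCast]

theorem intCast_zmod_pow_eq_one_iff_dvd {n : ℕ} :
    (a : ZMod M) ^ n = 1 ↔ (M : ℤ) ∣ a ^ n - 1 := by
  rw [← ZMod.intCast_zmod_eq_zero_iff_dvd, Int.cast_sub, sub_eq_zero, Int.cast_pow, Int.cast_one]

theorem orderOf_intCast_zmod_eq_of_isLeast {d : ℕ}
    (hd : IsLeast {e : ℕ | 0 < e ∧ (M : ℤ) ∣ a ^ e - 1} d) : orderOf (a : ZMod M) = d := by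
  simp only [← intCast_zmod_pow_eq_one_iff_dvd] at hd
  exact (orderOf_eq_iff hd.1.1).2 ⟨hd.1.2, fun e hed he h ↦ hed.not_ge (hd.2 ⟨he, h⟩)⟩

theorem isOfFinOrder_intCast_zmod (hM : M ≠ 0) (ha : IsCoprime a M) :
    IsOfFinOrder (a : ZMod M) := by
  have : NeZero M := ⟨hM⟩
  exact isOfFinOrder_iff_isUnit.2 ((ZMod.coe_int_isUnit_iff_isCoprime a M).2 ha.symm)

theorem isLeast_dvd_geom_sum (hM : M ≠ 0) (ha : IsCoprime a M) :
    IsLeast {n : ℕ | 0 < n ∧ (M : ℤ) ∣ ∑ i ∈ range n, a ^ i}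
      (orderOf (a : ZMod M) * (M / Int.gcd (∑ i ∈ range (orderOf (a : ZMod M)), a ^ i) M)) := by
  have : NeZero M := ⟨hM⟩
  simp only [← ZMod.intCast_zmod_eq_zero_iff_dvd, ← addOrderOf_intCast_zmod hM, Int.cast_sum,
    Int.cast_pow]
  exact stmt14_general (isOfFinOrder_intCast_zmod hM ha) (isOfFinAddOrder_of_finite _)

end ZMod

/-- If `d` is the multiplicative order of `a` modulo `M`, then the least positive `α` with
`M ∣ G_α = ∑_{m<α} a^m` is `d · (M / gcd(G_d, M))`. -/
theorem stmt14 (M : ℕ) (hM : 0 < M) (a : ℤ) (ha : IsCoprime a (M : ℤ))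
    (d : ℕ) (hd_pos : 0 < d) (hd_dvd : (M : ℤ) ∣ a ^ d - 1)
    (hd_min : ∀ e : ℕ, 0 < e → (M : ℤ) ∣ a ^ e - 1 → d ≤ e) :
    IsLeast {α : ℕ | 0 < α ∧ (M : ℤ) ∣ ∑ m ∈ Finset.range α, a ^ m}
      (d * (M / Int.gcd (∑ m ∈ Finset.range d, a ^ m) (M : ℤ))) := by
  obtain rfl := orderOf_intCast_zmod_eq_of_isLeast
    ⟨⟨hd_pos, hd_dvd⟩, fun e he ↦ hd_min e he.1 he.2⟩
  exact isLeast_dvd_geom_sum hM.ne' ha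
end
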